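/- arXiv:2111.11694 — 3 statements merged into one kernel-verified Lean document; each statement's English description precedes it below -/
import Mathlib

section
/- For every integer m ≥ 1 there exist constants C_m > 0 and κ_m ∈ (0,1), depending only on m, such that for all positive integers a₁,…,a_m and all S > 0 and ε > 0 with 0 < ε/(S·(a₁⋯a_m)^{1/2}) ≤ κ_m, one has log N(ε, G_m(a₁,…,a_m; S)) ≤ C_m·(S·(a₁⋯a_m)^{1/2}/ε)^{1/2}·(log(S·(a₁⋯a_m)^{1/2}/ε))^{3(2m−1)/4}, where the net is with respect to the Euclidean norm on ℝ^I; moreover, when m = 1 the bound holds without the logarithmic factor. -/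
open Finset

/-- The map `(L_I)²` : `((L_I)²β)_i = Σ_{j ≤ i} (Π_k (i_k - j_k + 1)) β_j`
(indices in `I = Π_k {0,…,a_k - 1}`, which corresponds to `Π_k {1,…,a_k}`). -/
noncomputable def Lsq (m : ℕ) (a : Fin m → ℕ)
    (β : (∀ k, Fin (a k)) → ℝ) : (∀ k, Fin (a k)) → ℝ :=
  fun i => ∑ j : ∀ k, Fin (a k),
    (if ∀ k, (j k : ℕ) ≤ (i k : ℕ) then
        ∏ k, (((i k : ℕ) : ℝ) - ((j k : ℕ) : ℝ) + 1)
      else 0) * β j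

/-- The class `G_m(a₁,…,a_m; S) = {(L_I)²β : a₁⋯a_m Σ_i |β_i| ≤ S}`. -/
def Gset (m : ℕ) (a : Fin m → ℕ) (S : ℝ) : Set ((∀ k, Fin (a k)) → ℝ) :=
  { θ | ∃ β, (∏ k, (a k : ℝ)) * ∑ i, |β i| ≤ S ∧ θ = Lsq m a β }

/-- Euclidean distance on `ℝ^ι`. -/
noncomputable def eDist {ι : Type*} [Fintype ι] (θ η : ι → ℝ) : ℝ :=
  Real.sqrt (∑ i, (θ i - η i) ^ 2)

/-- `T` is an `ε`-net of `A` with respect to the distance function `dst`. -/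
def IsNet {α : Type*} (dst : α → α → ℝ) (ε : ℝ) (A : Set α) (T : Finset α) : Prop :=
  ∀ a ∈ A, ∃ t ∈ T, dst a t ≤ ε

/-!
Writing `N = a₁⋯a_m` and `X = S √N / ε`, the class `G_m` is `S / N` times the absolutely convex hull
of the tensor products of the vectors `i ↦ (i - j + 1)₊`.

A convex hull of `K` vectors of squared norm at most `V` has a net of radius `√(V / k)` consisting
of averages of `k` of them (Maurey), at the entropy cost `log (K + k - 1).choose k`. Applied to all
columns at once this loses too much, so `j ↦ (i - j + 1)₊` is first expanded in the Faber–Schauder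
basis. This function has a single kink, so at level `n` the coefficients of each of the `2 ^ n`
blocks form a vector in `i` supported on `≲ a / 2 ^ n` points, of squared norm `≲ a³ / 8 ^ n`.
In the tensor product, level `n ∈ ℕ ^ m` has `2 ^ |n|` atoms of squared norm `≲ N³ / 8 ^ |n|`, where
`|n| = n₁ + ⋯ + n_m`.

Fix a critical level `n₀`. The number `k` of averaged atoms at level `n` can be chosen so that both
the radius and the entropy decay geometrically in `||n| - n₀|`. There are `≲ n₀ ^ (m - 1)` levels
with `|n|` near `n₀`, hence in total the radius is `≲ S √N n₀ ^ (m - 1) / 4 ^ n₀` and the entropy is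
`≲ 2 ^ n₀ n₀ ^ (m - 1)`. The choice `4 ^ n₀ ≈ X (log X) ^ (m - 1)` gives radius `ε` and entropy
`≲ X ^ (1 / 2) (log X) ^ (3 (m - 1) / 2)`, which improves on the exponent of the logarithm claimed
and has no logarithm for `m = 1`.
-/

lemma log_natCast_le_log_natCast {m n : ℕ} (h : m ≤ n) : Real.log m ≤ Real.log n := by
  rcases m.eq_zero_or_pos with rfl | hm
  · simpa using Real.log_natCast_nonneg n
  · exact Real.log_le_log (by exact_mod_cast hm) (by exact_mod_cast h)

section Entropy

open scoped Pointwise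

/-- `HasEntropyLE ε A L` is the metric entropy bound `log N(ε, A) ≤ L`. The centres of the net need
not lie in `A`. -/
def HasEntropyLE {E : Type*} [PseudoMetricSpace E] (ε : ℝ) (A : Set E) (L : ℝ) : Prop :=
  ∃ T : Finset E, IsNet dist ε A T ∧ Real.log #T ≤ L

lemma HasEntropyLE.mono {E : Type*} [PseudoMetricSpace E] {ε δ L M : ℝ} {A B : Set E}
    (h : HasEntropyLE ε B L) (hε : ε ≤ δ) (hAB : A ⊆ B) (hL : L ≤ M) : HasEntropyLE δ A M := by
  obtain ⟨T, hT, hcard⟩ := h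
  refine ⟨T, fun a ha => ?_, hcard.trans hL⟩
  obtain ⟨t, ht, hat⟩ := hT a (hAB ha)
  exact ⟨t, ht, hat.trans hε⟩

variable {E : Type*} [SeminormedAddCommGroup E] {ε δ L M : ℝ} {A B : Set E}

lemma hasEntropyLE_zero_of_norm_le (hA : ∀ x ∈ A, ‖x‖ ≤ ε) : HasEntropyLE ε A 0 :=
  ⟨{0}, fun x hx => ⟨0, mem_singleton_self 0, by simpa using hA x hx⟩, by simp⟩

lemma HasEntropyLE.add (hA : HasEntropyLE ε A L) (hB : HasEntropyLE δ B M) :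
    HasEntropyLE (ε + δ) (A + B) (L + M) := by
  classical
  obtain ⟨T, hT, hTcard⟩ := hA
  obtain ⟨U, hU, hUcard⟩ := hB
  refine ⟨T + U, ?_, ?_⟩
  · rintro _ ⟨x, hx, y, hy, rfl⟩
    obtain ⟨t, ht, hxt⟩ := hT x hx
    obtain ⟨u, hu, hyu⟩ := hU y hy
    exact ⟨t + u, add_mem_add ht hu, (dist_add_add_le x y t u).trans (add_le_add hxt hyu)⟩
  · refine le_trans ?_ (add_le_add hTcard hUcard)
    rcases (T + U).eq_empty_or_nonempty with hTU | hTU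
    · rw [hTU, card_empty, Nat.cast_zero, Real.log_zero]
      exact add_nonneg (Real.log_natCast_nonneg _) (Real.log_natCast_nonneg _)
    · have hT0 : (#T : ℝ) ≠ 0 := by exact_mod_cast (Finset.add_nonempty.1 hTU).1.card_pos.ne'
      have hU0 : (#U : ℝ) ≠ 0 := by exact_mod_cast (Finset.add_nonempty.1 hTU).2.card_pos.ne'
      rw [← Real.log_mul hT0 hU0]
      exact Real.log_le_log (by exact_mod_cast hTU.card_pos) (by exact_mod_cast card_add_le)

lemma HasEntropyLE.sum {ι : Type*} {s : Finset ι} {ε L : ι → ℝ} {A : ι → Set E}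
    (h : ∀ n ∈ s, HasEntropyLE (ε n) (A n) (L n)) :
    HasEntropyLE (∑ n ∈ s, ε n) (∑ n ∈ s, A n) (∑ n ∈ s, L n) := by
  classical
  induction s using Finset.induction_on with
  | empty => simpa using hasEntropyLE_zero_of_norm_le (A := (0 : Set E)) (ε := 0) (by simp)
  | insert n s hn ih =>
    rw [sum_insert hn, sum_insert hn, sum_insert hn]
    exact (h n (mem_insert_self n s)).add (ih fun i hi => h i (mem_insert_of_mem hi))

lemma HasEntropyLE.smul [NormedSpace ℝ E] {r : ℝ} (hr : 0 ≤ r) (hA : HasEntropyLE ε A L) :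
    HasEntropyLE (r * ε) (r • A) L := by
  classical
  obtain ⟨T, hT, hcard⟩ := hA
  refine ⟨T.image (r • ·), ?_, (log_natCast_le_log_natCast card_image_le).trans hcard⟩
  rintro _ ⟨x, hx, rfl⟩
  obtain ⟨t, ht, hxt⟩ := hT x hx
  refine ⟨r • t, mem_image_of_mem _ ht, ?_⟩
  change dist (r • x) (r • t) ≤ r * ε
  rw [dist_smul₀, Real.norm_of_nonneg hr]
  gcongr

end Entropy

section AbsConvex

open scoped Pointwise

lemma absConvex_sum {E ι : Type*} [AddCommGroup E] [Module ℝ E] {s : Finset ι} {A : ι → Set E}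
    (hA : ∀ n ∈ s, AbsConvex ℝ (A n)) : AbsConvex ℝ (∑ n ∈ s, A n) :=
  sum_induction A (AbsConvex ℝ) (fun _ _ hB hC => ⟨hB.1.add hC.1, hB.2.add hC.2⟩)
    ⟨balanced_zero, convex_zero⟩ hA

lemma sum_smul_mem_smul_of_absConvex {E J : Type*} [AddCommGroup E] [Module ℝ E] [Fintype J]
    {A : Set E} (hA : AbsConvex ℝ A) (hne : A.Nonempty) {z : J → E} (hz : ∀ j, z j ∈ A)
    {w : J → ℝ} {R : ℝ} (hw : ∑ j, |w j| ≤ R) : ∑ j, w j • z j ∈ R • A := by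
  classical
  have hpartial : ∀ s : Finset J, ∑ j ∈ s, w j • z j ∈ (∑ j ∈ s, |w j|) • A := fun s => by
    induction s using Finset.induction_on with
    | empty => simp [Set.zero_smul_set hne]
    | insert j s hj ih =>
      rw [sum_insert hj, sum_insert hj, hA.2.add_smul (abs_nonneg _) (by positivity)]
      exact Set.add_mem_add (hA.1.smul_mono (by simp) (Set.smul_mem_smul_set (hz j))) ih
  refine hA.1.smul_mono ?_ (hpartial univ)
  rw [Real.norm_of_nonneg (by positivity)]
  exact hw.trans (le_abs_self R)

end AbsConvex

section Maurey

variable {E : Type*} [NormedAddCommGroup E] [InnerProductSpace ℝ E] {V : ℝ}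

/- On `A` the functional `⟪v + x, ·⟫` takes a value at least as large as at `x`, and a point `y`
where it does makes the cross term in `‖v + x - y‖ ^ 2` favourable. -/
lemma exists_norm_add_sub_sq_le_of_mem_convexHull {A : Set E} {x : E} (hx : x ∈ convexHull ℝ A)
    (hA : ∀ y ∈ A, ‖y‖ ^ 2 ≤ V) (v : E) : ∃ y ∈ A, ‖v + (x - y)‖ ^ 2 ≤ ‖v‖ ^ 2 + V := by
  obtain ⟨y, hy, hxy⟩ := ((innerₛₗ ℝ (v + x)).convexOn convex_univ).exists_ge_of_mem_convexHull
    (Set.subset_univ A) hx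
  refine ⟨y, hy, ?_⟩
  have hxy' : inner ℝ (v + x) x ≤ inner ℝ (v + x) y := hxy
  rw [inner_add_left, real_inner_self_eq_norm_sq] at hxy'
  rw [← add_sub_assoc, norm_sub_sq_real, norm_add_sq_real]
  nlinarith [hA y hy, sq_nonneg ‖x‖]

lemma exists_sym_norm_smul_sub_sum_sq_le {P : Type*} {y : P → E} {x : E}
    (hx : x ∈ convexHull ℝ (Set.range y)) (hy : ∀ b, ‖y b‖ ^ 2 ≤ V) (k : ℕ) :
    ∃ s : Sym P k, ‖(k : ℝ) • x - ((s : Multiset P).map y).sum‖ ^ 2 ≤ k * V := by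
  induction k with
  | zero => exact ⟨Sym.nil, by simp⟩
  | succ k ih =>
    obtain ⟨s, hs⟩ := ih
    set v := (k : ℝ) • x - ((s : Multiset P).map y).sum with hv
    obtain ⟨_, ⟨b, rfl⟩, hb⟩ :=
      exists_norm_add_sub_sq_le_of_mem_convexHull hx (Set.forall_mem_range.2 hy) v
    refine ⟨b ::ₛ s, ?_⟩
    have hstep : ((k + 1 : ℕ) : ℝ) • x - (((b ::ₛ s : Sym P (k + 1)) : Multiset P).map y).sum =
        v + (x - y b) := by
      rw [Sym.coe_cons, Multiset.map_cons, Multiset.sum_cons, hv, Nat.cast_succ, add_smul, one_smul]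
      abel
    rw [hstep, Nat.cast_succ]
    linarith

lemma hasEntropyLE_convexHull_range {P : Type*} [Fintype P] {y : P → E} (hy : ∀ b, ‖y b‖ ^ 2 ≤ V)
    {k : ℕ} (hk : 0 < k) :
    HasEntropyLE √(V / k) (convexHull ℝ (Set.range y))
      (Real.log ((Fintype.card P).multichoose k)) := by
  classical
  have hk0 : (0 : ℝ) < k := by exact_mod_cast hk
  let average (s : Sym P k) : E := (k : ℝ)⁻¹ • ((s : Multiset P).map y).sum
  refine ⟨univ.image average, fun x hx => ?_, log_natCast_le_log_natCast ?_⟩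
  · obtain ⟨s, hs⟩ := exists_sym_norm_smul_sub_sum_sq_le hx hy k
    refine ⟨average s, mem_image_of_mem _ (mem_univ s), Real.le_sqrt_of_sq_le ?_⟩
    have haverage : x - average s = (k : ℝ)⁻¹ • ((k : ℝ) • x - ((s : Multiset P).map y).sum) := by
      rw [smul_sub, inv_smul_smul₀ hk0.ne']
    rw [dist_eq_norm, haverage, norm_smul, mul_pow, norm_inv, Real.norm_of_nonneg hk0.le]
    calc (k : ℝ)⁻¹ ^ 2 * _ ≤ (k : ℝ)⁻¹ ^ 2 * (k * V) := by gcongr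
      _ = V / k := by field_simp
  · rw [← Sym.card_sym_eq_multichoose, ← card_univ]
    exact card_image_le

lemma hasEntropyLE_absConvexHull_range {B : Type*} [Fintype B] {G : B → E}
    (hG : ∀ b, ‖G b‖ ^ 2 ≤ V) {k : ℕ} (hk : 0 < k) :
    HasEntropyLE √(V / k) (absConvexHull ℝ (Set.range G))
      (Real.log ((2 * Fintype.card B + k).choose k)) := by
  have hrange : Set.range (Sum.elim G (-G)) = Set.range G ∪ -Set.range G := by
    rw [Set.Sum.elim_range]
    congr 1
    ext x
    simp [neg_eq_iff_eq_neg]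
  rw [← convexHull_union_neg_eq_absConvexHull, ← hrange]
  refine (hasEntropyLE_convexHull_range (V := V) ?_ hk).mono le_rfl subset_rfl
    (log_natCast_le_log_natCast ?_)
  · rintro (b | b) <;> simpa using hG b
  · rw [Fintype.card_sum, ← two_mul, Nat.multichoose_eq]
    exact Nat.choose_le_choose k (Nat.sub_le _ 1)

end Maurey

section Dyadic

lemma log_choose_le {k N : ℕ} (hk : k ≤ N) :
    Real.log (N.choose k) ≤ k * (1 + Real.log (N / k)) := by
  rcases k.eq_zero_or_pos with rfl | hk0
  · simp
  have hk' : (0 : ℝ) < k := by exact_mod_cast hk0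
  have hN : (0 : ℝ) < N := hk'.trans_le (by exact_mod_cast hk)
  have hchoose : (N.choose k : ℝ) ≤ (N / k) ^ k * Real.exp k :=
    calc (N.choose k : ℝ) ≤ (N : ℝ) ^ k / k.factorial := Nat.choose_le_pow_div k N
      _ = (N / k) ^ k * ((k : ℝ) ^ k / k.factorial) := by
        rw [← mul_div_assoc, ← mul_pow, div_mul_cancel₀ _ hk'.ne']
      _ ≤ (N / k) ^ k * Real.exp k := by
        gcongr
        exact Real.pow_div_factorial_le_exp _ hk'.le k
  calc Real.log (N.choose k) ≤ Real.log ((N / k) ^ k * Real.exp k) :=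
        Real.log_le_log (by exact_mod_cast Nat.choose_pos hk) hchoose
    _ = k * (1 + Real.log (N / k)) := by
      rw [Real.log_mul (by positivity) (by positivity), Real.log_pow, Real.log_exp]
      ring

lemma log_choose_le_of_le_two_pow_mul {p q r : ℕ} (hq : 0 < q) (h : p + q ≤ 2 ^ r * q) :
    Real.log ((p + q).choose q) ≤ q * (r + 1) := by
  have hq' : (0 : ℝ) < q := by exact_mod_cast hq
  have hratio : ((p + q : ℕ) : ℝ) / q ≤ 2 ^ r := by
    rw [div_le_iff₀ hq']
    exact_mod_cast h
  have hlog : Real.log ((p + q : ℕ) / q) ≤ r :=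
    calc Real.log ((p + q : ℕ) / q) ≤ Real.log ((2 : ℝ) ^ r) :=
          Real.log_le_log (by positivity) hratio
      _ = r * Real.log 2 := Real.log_pow 2 r
      _ ≤ r * 1 := by gcongr; linarith [Real.log_two_lt_d9]
      _ = r := mul_one _
  calc Real.log ((p + q).choose q) ≤ q * (1 + Real.log ((p + q : ℕ) / q)) :=
        log_choose_le (Nat.le_add_left q p)
    _ ≤ q * (r + 1) := by
      rw [add_comm (1 : ℝ)]
      gcongr

/-- The profile `(t + 1) / 2 ^ t` by which the entropy spent on a dyadic level decays with the
distance `t` of that level from the critical one. -/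
noncomputable def decay (t : ℕ) : ℝ := (t + 1) / 2 ^ t

lemma decay_nonneg (t : ℕ) : 0 ≤ decay t := by
  unfold decay
  positivity

variable {E B : Type*} [NormedAddCommGroup E] {G : B → E} {D : ℝ} {n t u : ℕ}

lemma norm_le_of_mem_absConvexHull_range [NormedSpace ℝ E] {ε : ℝ} (hG : ∀ b, ‖G b‖ ≤ ε) {x : E}
    (hx : x ∈ absConvexHull ℝ (Set.range G)) : ‖x‖ ≤ ε := by
  have hball : Set.range G ⊆ Metric.closedBall 0 ε :=
    Set.range_subset_iff.2 fun b => mem_closedBall_zero_iff.2 (hG b)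
  exact mem_closedBall_zero_iff.1
    (absConvexHull_min hball ⟨balanced_closedBall_zero, convex_closedBall 0 ε⟩ hx)

lemma sqrt_div_le_of_le_mul {k : ℝ} (hD : 0 ≤ D) (hk : (16 : ℝ) ^ u * 4 ^ t ≤ 8 ^ n * k) :
    √(D / 8 ^ n / k) ≤ √D / (4 ^ u * 2 ^ t) := by
  rw [Real.sqrt_le_left (by positivity), div_pow, Real.sq_sqrt hD, div_div]
  refine div_le_div_of_nonneg_left hD (by positivity) (le_of_eq_of_le ?_ hk)
  rw [mul_pow, ← pow_mul, ← pow_mul, mul_comm u, mul_comm t, pow_mul, pow_mul]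
  norm_num

lemma hasEntropyLE_absConvexHull_of_two_mul_critical_le [NormedSpace ℝ E] (hut : u ≤ t)
    (hD : 0 ≤ D) (hG : ∀ b, ‖G b‖ ^ 2 ≤ D / 8 ^ (u + t)) :
    HasEntropyLE (√D / (4 ^ u * 2 ^ t)) (absConvexHull ℝ (Set.range G)) 0 := by
  have hpow : (16 : ℝ) ^ u * 4 ^ t ≤ 8 ^ (u + t) * 1 :=
    calc (16 : ℝ) ^ u * 4 ^ t = 8 ^ u * 2 ^ u * 4 ^ t := by rw [← mul_pow]; norm_num
      _ ≤ 8 ^ u * 2 ^ t * 4 ^ t := by gcongr; norm_num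
      _ = 8 ^ (u + t) * 1 := by rw [mul_assoc, ← mul_pow, pow_add]; norm_num
  have hG' : ∀ b, ‖G b‖ ≤ √D / (4 ^ u * 2 ^ t) := fun b =>
    (Real.le_sqrt_of_sq_le (by simpa using hG b)).trans (sqrt_div_le_of_le_mul hD hpow)
  exact hasEntropyLE_zero_of_norm_le fun x hx => norm_le_of_mem_absConvexHull_range hG' hx

variable [InnerProductSpace ℝ E] [Fintype B]

lemma hasEntropyLE_absConvexHull_of_critical_le (hB : Fintype.card B = 2 ^ (u + t + t))
    (hD : 0 ≤ D) (hG : ∀ b, ‖G b‖ ^ 2 ≤ D / 8 ^ (u + t + t)) :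
    HasEntropyLE (√D / (4 ^ (u + t) * 2 ^ t)) (absConvexHull ℝ (Set.range G))
      (12 * 2 ^ (u + t) * decay t) := by
  refine (hasEntropyLE_absConvexHull_range hG (k := 2 ^ u) (by positivity)).mono
    (sqrt_div_le_of_le_mul hD (le_of_eq ?_)) subset_rfl ?_
  · calc (16 : ℝ) ^ (u + t) * 4 ^ t = (8 * 2) ^ (u + t) * 4 ^ t := by norm_num
      _ = 8 ^ (u + t) * (2 * 4) ^ t * 2 ^ u := by rw [mul_pow, mul_pow, pow_add 2]; ring
      _ = 8 ^ (u + t + t) * (2 ^ u : ℕ) := by rw [pow_add _ (u + t)]; norm_num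
  · have hsize : 2 * 2 ^ (u + t + t) + 2 ^ u ≤ 2 ^ (2 * t + 2) * 2 ^ u := by
      have : 1 ≤ 4 ^ t := Nat.one_le_pow' t 3
      calc 2 * 2 ^ (u + t + t) + 2 ^ u = (2 * 4 ^ t + 1) * 2 ^ u := by
            rw [pow_add, pow_add, ← mul_assoc 2, show 4 = 2 * 2 by rfl, mul_pow]; ring
        _ ≤ (4 ^ t * 4) * 2 ^ u := by gcongr; omega
        _ = 2 ^ (2 * t + 2) * 2 ^ u := by rw [pow_add, pow_mul]; norm_num
    rw [hB]
    refine (log_choose_le_of_le_two_pow_mul (by positivity) hsize).trans ?_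
    have hscale : 12 * 2 ^ (u + t) * decay t = 2 ^ u * (12 * (t + 1)) := by
      unfold decay
      rw [pow_add]
      field_simp
    rw [hscale]
    push_cast
    gcongr
    linarith [t.cast_nonneg (α := ℝ)]

lemma hasEntropyLE_absConvexHull_of_le_critical (hB : Fintype.card B = 2 ^ n) (hD : 0 ≤ D)
    (hG : ∀ b, ‖G b‖ ^ 2 ≤ D / 8 ^ n) :
    HasEntropyLE (√D / (4 ^ (n + t) * 2 ^ t)) (absConvexHull ℝ (Set.range G))
      (12 * 2 ^ (n + t) * decay t) := by
  refine (hasEntropyLE_absConvexHull_range hG (k := 2 ^ (n + 6 * t)) (by positivity)).mono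
    (sqrt_div_le_of_le_mul hD (le_of_eq ?_)) subset_rfl ?_
  · calc (16 : ℝ) ^ (n + t) * 4 ^ t = (8 * 2) ^ n * (16 * 4) ^ t := by
          rw [mul_pow 16, pow_add]
          norm_num
          ring
      _ = 8 ^ n * (2 ^ n * (2 ^ 6) ^ t) := by rw [mul_pow]; norm_num [mul_assoc]
      _ = 8 ^ n * (2 ^ (n + 6 * t) : ℕ) := by rw [← pow_mul, ← pow_add]; norm_cast
  · have hsize : 2 ^ (n + 6 * t) + 2 * 2 ^ n ≤ 2 ^ (6 * t + 1) * (2 * 2 ^ n) := by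
      have : 1 ≤ 2 ^ (6 * t) := Nat.one_le_two_pow
      calc 2 ^ (n + 6 * t) + 2 * 2 ^ n = (2 ^ (6 * t) + 2) * 2 ^ n := by ring
        _ ≤ (2 ^ (6 * t) * 4) * 2 ^ n := by gcongr; omega
        _ = 2 ^ (6 * t + 1) * (2 * 2 ^ n) := by ring
    rw [hB, ← Nat.choose_symm_add, add_comm (2 * 2 ^ n)]
    refine (log_choose_le_of_le_two_pow_mul (by positivity) hsize).trans ?_
    have hscale : 12 * 2 ^ (n + t) * decay t = 2 * 2 ^ n * (6 * (t + 1)) := by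
      unfold decay
      rw [pow_add]
      field_simp
      ring
    rw [hscale]
    push_cast
    gcongr
    linarith

lemma hasEntropyLE_absConvexHull_of_card_eq_two_pow (hB : Fintype.card B = 2 ^ n) (hD : 0 ≤ D)
    (hG : ∀ b, ‖G b‖ ^ 2 ≤ D / 8 ^ n) (n₀ : ℕ) :
    HasEntropyLE (√D / (4 ^ n₀ * 2 ^ n.dist n₀)) (absConvexHull ℝ (Set.range G))
      (12 * 2 ^ n₀ * decay (n.dist n₀)) := by
  rcases le_total n n₀ with h | h
  · obtain ⟨t, rfl⟩ := Nat.exists_eq_add_of_le h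
    rw [Nat.dist_eq_sub_of_le h, Nat.add_sub_cancel_left]
    exact hasEntropyLE_absConvexHull_of_le_critical hB hD hG
  · obtain ⟨t, rfl⟩ := Nat.exists_eq_add_of_le h
    rw [Nat.dist_eq_sub_of_le_right h, Nat.add_sub_cancel_left]
    rcases le_total n₀ t with hut | hut
    · exact (hasEntropyLE_absConvexHull_of_two_mul_critical_le hut hD hG).mono le_rfl subset_rfl
        (mul_nonneg (by positivity) (decay_nonneg t))
    · obtain ⟨u, rfl⟩ := Nat.exists_eq_add_of_le' hut
      exact hasEntropyLE_absConvexHull_of_critical_le hB hD hG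

end Dyadic

section DyadicExpansion

/-- The one-dimensional factor `(i - j + 1)₊` of the kernel of `(L_I)²`. -/
noncomputable def ramp (i j : ℕ) : ℝ := max ((i : ℝ) + 1 - j) 0

/-- The value at `j` of the piecewise linear interpolant of `F` at the multiples of `h`. -/
noncomputable def interp (F : ℕ → ℝ) (h j : ℕ) : ℝ :=
  (1 - (j % h : ℕ) / (h : ℝ)) * F (h * (j / h)) + (j % h : ℕ) / (h : ℝ) * F (h * (j / h + 1))

/-- The `2h`-periodic Faber–Schauder hat function, vanishing at the multiples of `2h` and equal to
`1` at their midpoints. -/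
noncomputable def hat (h j : ℕ) : ℝ := 1 - |((j % (2 * h) : ℕ) : ℝ) - h| / h

/-- The Faber–Schauder coefficient of `F` on `[2bh, 2(b + 1)h]`: the error at the midpoint of linear
interpolation between the endpoints. -/
noncomputable def midpointGap (F : ℕ → ℝ) (h b : ℕ) : ℝ :=
  F (h * (2 * b + 1)) - (F (h * (2 * b)) + F (h * (2 * b + 2))) / 2

lemma interp_mul_add (F : ℕ → ℝ) {h r : ℕ} (hr : r < h) (b : ℕ) :
    interp F h (h * b + r) = (1 - (r : ℝ) / h) * F (h * b) + (r : ℝ) / h * F (h * (b + 1)) := by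
  unfold interp
  rw [Nat.mul_add_mod, Nat.mod_eq_of_lt hr, Nat.mul_add_div (by omega), Nat.div_eq_of_lt hr,
    add_zero]

lemma interp_one (F : ℕ → ℝ) (j : ℕ) : interp F 1 j = F j := by
  simp [interp, Nat.mod_one]

lemma interp_of_lt (F : ℕ → ℝ) {h j : ℕ} (hj : j < h) :
    interp F h j = (1 - (j : ℝ) / h) * F 0 + (j : ℝ) / h * F h := by
  simpa using interp_mul_add F hj 0

lemma abs_hat_le_one {h : ℕ} (hh : 0 < h) (j : ℕ) : |hat h j| ≤ 1 := by
  have hh' : (0 : ℝ) < h := by exact_mod_cast hh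
  have hmod : ((j % (2 * h) : ℕ) : ℝ) ≤ 2 * h := by exact_mod_cast (Nat.mod_lt j (by omega)).le
  have hratio : |((j % (2 * h) : ℕ) : ℝ) - h| / h ≤ 1 := by
    rw [div_le_one hh', abs_sub_le_iff]
    constructor <;> linarith [(j % (2 * h)).cast_nonneg (α := ℝ)]
  rw [hat, abs_of_nonneg (by linarith)]
  linarith [show 0 ≤ |((j % (2 * h) : ℕ) : ℝ) - h| / h by positivity]

lemma interp_eq_interp_two_mul_add (F : ℕ → ℝ) {h : ℕ} (hh : 0 < h) (j : ℕ) :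
    interp F h j = interp F (2 * h) j + hat h j * midpointGap F h (j / (2 * h)) := by
  have : (0 : ℝ) < h := by exact_mod_cast hh
  have h2 : 0 < 2 * h := by omega
  obtain ⟨b, r, hr, rfl⟩ : ∃ b r, r < 2 * h ∧ j = 2 * h * b + r :=
    ⟨j / (2 * h), j % (2 * h), Nat.mod_lt _ h2, (Nat.div_add_mod _ _).symm⟩
  rw [interp_mul_add F hr, hat, Nat.mul_add_mod, Nat.mod_eq_of_lt hr, Nat.mul_add_div h2,
    Nat.div_eq_of_lt hr, add_zero, midpointGap, show 2 * h * b = h * (2 * b) by ring,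
    show 2 * h * (b + 1) = h * (2 * b + 2) by ring, Nat.cast_mul, Nat.cast_two]
  rcases lt_or_ge r h with hrh | hrh
  · have hrh' : (r : ℝ) ≤ h := by exact_mod_cast hrh.le
    rw [interp_mul_add F hrh, abs_of_nonpos (by linarith)]
    field_simp
    ring
  · obtain ⟨q, rfl⟩ := Nat.exists_eq_add_of_le hrh
    rw [← add_assoc, ← Nat.mul_succ, interp_mul_add F (by omega : q < h), Nat.cast_add,
      add_sub_cancel_left, Nat.abs_cast]
    field_simp
    ring

lemma eq_interp_two_pow_add_sum (F : ℕ → ℝ) (L j : ℕ) :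
    F j = interp F (2 ^ L) j + ∑ n ∈ range L,
      hat (2 ^ n) j * midpointGap F (2 ^ n) (j / (2 * 2 ^ n)) := by
  induction L with
  | zero => simp [interp_one]
  | succ L ih =>
    rw [ih, interp_eq_interp_two_mul_add F (by positivity), sum_range_succ, pow_succ' 2 L]
    ring

lemma sq_midpointGap_ramp_le (i h b : ℕ) :
    midpointGap (ramp i) h b ^ 2 ≤
      if i ∈ Ico (h * (2 * b)) (h * (2 * b) + 2 * h) then (h : ℝ) ^ 2 else 0 := by
  set x : ℝ := (i : ℝ) + 1 - h * (2 * b)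
  have : (0 : ℝ) ≤ h := h.cast_nonneg
  have hgap : midpointGap (ramp i) h b =
      max (x - h) 0 - (max x 0 + max (x - 2 * h) 0) / 2 := by
    unfold midpointGap ramp
    push_cast
    rw [show (i : ℝ) + 1 - h * (2 * b + 1) = x - h by ring,
      show (i : ℝ) + 1 - h * (2 * b + 2) = x - 2 * h by ring]
  rw [hgap]
  split_ifs with hi
  · refine sq_le_sq' ?_ ?_ <;>
    rcases max_cases (x - h) 0 with ⟨h1, _⟩ | ⟨h1, _⟩ <;>
    rcases max_cases x 0 with ⟨h2, _⟩ | ⟨h2, _⟩ <;>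
    rcases max_cases (x - 2 * h) 0 with ⟨h3, _⟩ | ⟨h3, _⟩ <;>
    rw [h1, h2, h3] <;> linarith
  · refine le_of_eq ?_
    rw [mem_Ico, not_and_or, not_le, not_lt] at hi
    rcases hi with hi | hi
    · have hx0 : x ≤ 0 := by
        have : (i : ℝ) + 1 ≤ h * (2 * b) := by exact_mod_cast hi
        linarith
      rw [max_eq_right (by linarith), max_eq_right hx0, max_eq_right (by linarith)]
      ring
    · have hxh : 2 * h ≤ x := by
        have : (h : ℝ) * (2 * b) + 2 * h ≤ i := by exact_mod_cast hi
        linarith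
      rw [max_eq_left (by linarith), max_eq_left (by linarith), max_eq_left (by linarith)]
      ring

lemma sum_sq_midpointGap_ramp_le (a h b : ℕ) :
    ∑ i : Fin a, midpointGap (ramp i) h b ^ 2 ≤ 2 * (h : ℝ) ^ 3 := by
  set block := Ico (h * (2 * b)) (h * (2 * b) + 2 * h) with hblock
  have hcard : (#{i ∈ range a | i ∈ block} : ℝ) ≤ 2 * h := by
    have : #{i ∈ range a | i ∈ block} ≤ #block :=
      card_le_card fun i hi => (mem_filter.1 hi).2
    rw [hblock, Nat.card_Ico, Nat.add_sub_cancel_left] at this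
    exact_mod_cast this
  calc ∑ i : Fin a, midpointGap (ramp i) h b ^ 2
      = ∑ i ∈ range a, midpointGap (ramp i) h b ^ 2 :=
        Fin.sum_univ_eq_sum_range (fun i => midpointGap (ramp i) h b ^ 2) a
    _ ≤ ∑ i ∈ range a, if i ∈ block then (h : ℝ) ^ 2 else 0 :=
        sum_le_sum fun i _ => sq_midpointGap_ramp_le i h b
    _ = #{i ∈ range a | i ∈ block} * (h : ℝ) ^ 2 := by
        rw [← sum_filter, sum_const, nsmul_eq_mul]
    _ ≤ 2 * h * (h : ℝ) ^ 2 := by gcongr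
    _ = 2 * (h : ℝ) ^ 3 := by ring

/-- A decomposition of the matrix `K` into dyadic levels `n < depth`. At level `n` the columns are
grouped into `2 ^ n` blocks, and the columns of a block are multiples, by factors in `[-1, 1]`, of
one vector (the atom of the block) of squared Euclidean norm at most `D / 8 ^ n`. -/
structure DyadicExpansion {I J : Type*} [Fintype I] (K : I → J → ℝ) (D : ℝ) where
  depth : ℕ
  coeff : ℕ → J → ℝ
  block : (n : ℕ) → J → Fin (2 ^ n)
  atom : (n : ℕ) → Fin (2 ^ n) → I → ℝ
  abs_coeff_le : ∀ n j, |coeff n j| ≤ 1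
  sum_sq_atom_le : ∀ n < depth, ∀ x, ∑ i, atom n x i ^ 2 ≤ D / 8 ^ n
  kernel_eq : ∀ i j, K i j = ∑ n ∈ range depth, coeff n j * atom n (block n j) i

/-- The factor of column `j` at level `n` of the Faber–Schauder expansion of `ramp` on `[0, 2 ^ L)`:
the hat function of mesh `2 ^ (L - n)`, and at level `0` the linear function vanishing at
`2 ^ L`. -/
noncomputable def rampCoeff (L : ℕ) : ℕ → ℕ → ℝ
  | 0, j => 1 - j / 2 ^ L
  | n + 1, j => hat (2 ^ (L - (n + 1))) j

/-- The dyadic interval of length `2 ^ (L + 1 - n)` containing `j`. -/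
def rampBlock (L : ℕ) : ℕ → ℕ → ℕ
  | 0, _ => 0
  | n + 1, j => j / (2 * 2 ^ (L - (n + 1)))

/-- The vector of Faber–Schauder coefficients of `ramp` on block `x` of level `n`. -/
noncomputable def rampAtom (L : ℕ) : ℕ → ℕ → ℕ → ℝ
  | 0, _, i => ramp i 0
  | n + 1, x, i => midpointGap (ramp i) (2 ^ (L - (n + 1))) x

variable {L a j : ℕ}

lemma abs_rampCoeff_le_one (hj : j < 2 ^ L) (n : ℕ) : |rampCoeff L n j| ≤ 1 := by
  cases n with
  | zero =>
    have hle : (j : ℝ) / 2 ^ L ≤ 1 := by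
      rw [div_le_one (by positivity)]
      exact_mod_cast hj.le
    rw [rampCoeff, abs_of_nonneg (by linarith)]
    linarith [show 0 ≤ (j : ℝ) / 2 ^ L by positivity]
  | succ n => exact abs_hat_le_one (by positivity) j

lemma rampBlock_lt (hj : j < 2 ^ L) (n : ℕ) : rampBlock L n j < 2 ^ n := by
  cases n with
  | zero => exact Nat.one_pos
  | succ n =>
    rw [rampBlock, Nat.div_lt_iff_lt_mul (by positivity), ← pow_succ', ← pow_add]
    exact hj.trans_le (Nat.pow_le_pow_right two_pos (by omega))

lemma sum_sq_rampAtom_le (hL : 2 ^ L ≤ 2 * a) {n : ℕ} (hn : n ≤ L) (x : ℕ) :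
    ∑ i : Fin a, rampAtom L n x i ^ 2 ≤ 16 * (a : ℝ) ^ 3 / 8 ^ n := by
  cases n with
  | zero =>
    have hsq : ∀ i : Fin a, rampAtom L 0 x i ^ 2 ≤ (a : ℝ) ^ 2 := fun i => by
      have hi : (i : ℝ) + 1 ≤ a := by exact_mod_cast i.2
      simp only [rampAtom, ramp, Nat.cast_zero, sub_zero]
      gcongr
      exact max_le hi a.cast_nonneg
    calc ∑ i : Fin a, rampAtom L 0 x i ^ 2 ≤ ∑ _i : Fin a, (a : ℝ) ^ 2 :=
          sum_le_sum fun i _ => hsq i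
      _ = 1 * (a : ℝ) ^ 3 := by rw [sum_const, card_univ, Fintype.card_fin, nsmul_eq_mul]; ring
      _ ≤ 16 * (a : ℝ) ^ 3 / 8 ^ 0 := by rw [pow_zero, div_one]; gcongr; norm_num
  | succ n =>
    have hL' : (2 : ℝ) ^ L ≤ 2 * a := by exact_mod_cast hL
    have hscale : ((2 : ℝ) ^ (L - (n + 1))) ^ 3 = (2 ^ L) ^ 3 / 8 ^ (n + 1) := by
      rw [pow_sub₀ _ two_ne_zero hn, mul_pow, inv_pow, ← pow_mul 2 (n + 1), mul_comm (n + 1),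
        pow_mul, div_eq_mul_inv]
      norm_num
    calc ∑ i : Fin a, rampAtom L (n + 1) x i ^ 2
        ≤ 2 * ((2 ^ (L - (n + 1)) : ℕ) : ℝ) ^ 3 := sum_sq_midpointGap_ramp_le a _ x
      _ = 2 * (2 ^ L) ^ 3 / 8 ^ (n + 1) := by
        rw [Nat.cast_pow, Nat.cast_two, hscale, mul_div_assoc]
      _ ≤ 2 * (2 * a) ^ 3 / 8 ^ (n + 1) := by gcongr
      _ = 16 * (a : ℝ) ^ 3 / 8 ^ (n + 1) := by ring

lemma ramp_eq_sum {i : ℕ} (hi : i < 2 ^ L) (hj : j < 2 ^ L) :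
    ramp i j = ∑ n ∈ range (L + 1), rampCoeff L n j * rampAtom L n (rampBlock L n j) i := by
  have hend : ramp i (2 ^ L) = 0 := by
    have : (i : ℝ) + 1 ≤ (2 ^ L : ℕ) := by exact_mod_cast hi
    exact max_eq_right (by linarith)
  rw [sum_range_succ', add_comm, eq_interp_two_pow_add_sum (ramp i) L j, interp_of_lt _ hj, hend,
    ← sum_range_reflect]
  simp only [rampCoeff, rampAtom, rampBlock, mul_zero, add_zero, Nat.cast_pow, Nat.cast_two]
  congr 1
  refine sum_congr rfl fun n _ => ?_
  rw [Nat.sub_sub, add_comm 1 n]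

/-- The Faber–Schauder expansion of `ramp` on the interval `[0, 2 ^ L)`, where `L` is least with
`a < 2 ^ L`. -/
noncomputable def rampExpansion (a : ℕ) (ha : 1 ≤ a) :
    DyadicExpansion (fun i j : Fin a => ramp i j) (16 * (a : ℝ) ^ 3) :=
  let L := Nat.log 2 a + 1
  have ha_lt : a < 2 ^ L := Nat.lt_pow_succ_log_self one_lt_two a
  have hL_le : 2 ^ L ≤ 2 * a := by
    rw [pow_succ']
    exact Nat.mul_le_mul_left 2 (Nat.pow_log_le_self 2 (by omega))
  { depth := L + 1
    coeff := fun n j => rampCoeff L n j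
    block := fun n j => ⟨rampBlock L n j, rampBlock_lt (j.2.trans ha_lt) n⟩
    atom := fun n x i => rampAtom L n x i
    abs_coeff_le := fun n j => abs_rampCoeff_le_one (j.2.trans ha_lt) n
    sum_sq_atom_le := fun _ hn x => sum_sq_rampAtom_le hL_le (Nat.le_of_lt_succ hn) x
    kernel_eq := fun i j => ramp_eq_sum (i.2.trans ha_lt) (j.2.trans ha_lt) }

end DyadicExpansion

section Counting

lemma card_filter_sum_eq_le (p q : ℕ) (s : Finset (Fin (p + 1) → ℕ)) :
    #{n ∈ s | ∑ k, n k = q} ≤ (q + 1) ^ p := by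
  classical
  have hbox : #(Fintype.piFinset fun _ : Fin p => range (q + 1)) = (q + 1) ^ p := by simp
  rw [← hbox]
  refine card_le_card_of_injOn Fin.tail (fun n hn => ?_) fun n hn n' hn' htail => ?_
  · have hsum : ∑ k, n k = q := (mem_filter.1 hn).2
    refine mem_coe.2 (Fintype.mem_piFinset.2 fun k => mem_range.2 (Nat.lt_succ_of_le ?_))
    exact (single_le_sum (fun _ _ => Nat.zero_le _) (mem_univ k.succ)).trans hsum.le
  · have hsum : n 0 + ∑ k, Fin.tail n k = n' 0 + ∑ k, Fin.tail n' k := by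
      have := (mem_filter.1 hn).2.trans (mem_filter.1 hn').2.symm
      rwa [Fin.sum_univ_succ, Fin.sum_univ_succ] at this
    rw [htail, add_left_inj] at hsum
    rw [← Fin.cons_self_tail n, ← Fin.cons_self_tail n', htail, hsum]

lemma sum_dist_le_two_mul_tsum {f : ℕ → ℝ} (hf : Summable f) (hf0 : ∀ t, 0 ≤ f t) (n₀ : ℕ)
    (s : Finset ℕ) : ∑ q ∈ s, f (q.dist n₀) ≤ 2 * ∑' t, f t := by
  have hhalf : ∀ u : Finset ℕ, Set.InjOn (fun q : ℕ => q.dist n₀) (u : Set ℕ) →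
      ∑ q ∈ u, f (q.dist n₀) ≤ ∑' t, f t := fun u hu => by
    rw [← sum_image (f := f) hu]
    exact hf.sum_le_tsum _ fun t _ => hf0 t
  rw [← sum_filter_add_sum_filter_not s (· ≤ n₀), two_mul]
  refine add_le_add (hhalf _ ?_) (hhalf _ ?_) <;>
  · intro q hq q' hq' hdist
    simp only [coe_filter, Set.mem_ofPred_eq, Nat.dist] at hq hq' hdist
    omega

lemma summable_pow_mul_decay (p : ℕ) : Summable fun t : ℕ => ((t : ℝ) + 1) ^ p * decay t := by
  have hgeom := summable_pow_mul_geometric_of_norm_lt_one (p + 1) (r := (1 / 2 : ℝ)) (by norm_num)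
  refine (((summable_nat_add_iff 1).2 hgeom).mul_left 2).congr fun t => ?_
  unfold decay
  push_cast
  rw [pow_succ (1 / 2 : ℝ), one_div_pow, pow_succ]
  field_simp

/-- The constant with which the profiles `decay` of all levels in `ℕ ^ (p + 1)` sum up to at most
`decaySum p * (n₀ + 1) ^ p`, where `n₀` is the critical level. -/
noncomputable def decaySum (p : ℕ) : ℝ := 2 * ∑' t : ℕ, ((t : ℝ) + 1) ^ p * decay t

lemma succ_pow_le_decaySum_mul (p n : ℕ) : ((n : ℝ) + 1) ^ p ≤ decaySum p * 2 ^ n := by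
  have hterm_nonneg : ∀ t : ℕ, 0 ≤ ((t : ℝ) + 1) ^ p * decay t := fun t =>
    mul_nonneg (by positivity) (decay_nonneg t)
  have htsum_nonneg : 0 ≤ ∑' t : ℕ, ((t : ℝ) + 1) ^ p * decay t := tsum_nonneg hterm_nonneg
  rw [← div_le_iff₀ (by positivity)]
  calc ((n : ℝ) + 1) ^ p / 2 ^ n ≤ ((n : ℝ) + 1) ^ p * decay n := by
        rw [decay, div_eq_mul_one_div]
        gcongr
        linarith [n.cast_nonneg (α := ℝ)]
    _ ≤ ∑' t : ℕ, ((t : ℝ) + 1) ^ p * decay t :=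
        (summable_pow_mul_decay p).le_tsum n fun t _ => hterm_nonneg t
    _ ≤ decaySum p := by
        unfold decaySum
        linarith

lemma one_le_decaySum (p : ℕ) : 1 ≤ decaySum p := by
  simpa using succ_pow_le_decaySum_mul p 0

lemma sum_decay_dist_le {p : ℕ} (s : Finset (Fin (p + 1) → ℕ)) (n₀ : ℕ) :
    ∑ n ∈ s, decay ((∑ k, n k).dist n₀) ≤ decaySum p * ((n₀ : ℝ) + 1) ^ p := by
  classical
  have hfiber : ∀ q, (#{n ∈ s | ∑ k, n k = q} : ℝ) ≤
      ((n₀ : ℝ) + 1) ^ p * (((q.dist n₀ : ℕ) : ℝ) + 1) ^ p := fun q => by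
    have hq : q + 1 ≤ (n₀ + 1) * (q.dist n₀ + 1) := by
      have : q ≤ n₀ + q.dist n₀ := by unfold Nat.dist; omega
      nlinarith [Nat.zero_le (n₀ * q.dist n₀)]
    rw [← mul_pow]
    exact_mod_cast (card_filter_sum_eq_le p q s).trans (Nat.pow_le_pow_left hq p)
  rw [sum_comp (fun q => decay (q.dist n₀)) (fun n : Fin (p + 1) → ℕ => ∑ k, n k)]
  calc ∑ q ∈ s.image (fun n => ∑ k, n k), #{n ∈ s | ∑ k, n k = q} • decay (q.dist n₀)
      ≤ ∑ q ∈ s.image (fun n => ∑ k, n k),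
          ((n₀ : ℝ) + 1) ^ p * ((((q.dist n₀ : ℕ) : ℝ) + 1) ^ p * decay (q.dist n₀)) := by
        refine sum_le_sum fun q _ => ?_
        rw [nsmul_eq_mul, ← mul_assoc]
        exact mul_le_mul_of_nonneg_right (hfiber q) (decay_nonneg _)
    _ ≤ ((n₀ : ℝ) + 1) ^ p * decaySum p := by
        rw [← mul_sum]
        gcongr
        exact sum_dist_le_two_mul_tsum (summable_pow_mul_decay p)
          (fun t => mul_nonneg (by positivity) (decay_nonneg t)) n₀ _
    _ = decaySum p * ((n₀ : ℝ) + 1) ^ p := mul_comm _ _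

end Counting

section Tensor

open scoped Pointwise

variable {ι : Type*} [Fintype ι] {I J : ι → Type*} {K : ∀ k, I k → J k → ℝ} {D : ι → ℝ}

/-- The elementary tensor `⊗ₖ f k`, as a vector of the Euclidean space on `∏ₖ I k`. -/
noncomputable def tensor (f : ∀ k, I k → ℝ) : EuclideanSpace ℝ (∀ k, I k) :=
  WithLp.toLp 2 fun i => ∏ k, f k (i k)

variable [DecidableEq ι]

lemma tensor_sum_smul {α : ι → Type*} (s : ∀ k, Finset (α k)) (c : ∀ k, α k → ℝ)
    (f : ∀ k, α k → I k → ℝ) :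
    tensor (fun k i => ∑ n ∈ s k, c k n * f k n i) =
      ∑ n ∈ Fintype.piFinset s, (∏ k, c k (n k)) • tensor fun k => f k (n k) := by
  ext i
  simp only [tensor, WithLp.ofLp_sum, WithLp.ofLp_smul, Finset.sum_apply, Pi.smul_apply,
    smul_eq_mul, prod_univ_sum, prod_mul_distrib]

variable [∀ k, Fintype (I k)]

lemma norm_sq_tensor (f : ∀ k, I k → ℝ) : ‖tensor f‖ ^ 2 = ∏ k, ∑ i, f k i ^ 2 := by
  simp only [tensor, EuclideanSpace.norm_sq_eq, Real.norm_eq_abs, sq_abs, ← prod_pow]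
  rw [prod_univ_sum, Fintype.piFinset_univ]

/-- The tensor product of the one-dimensional atoms of blocks `x k` at levels `n k`. -/
noncomputable def tensorAtom (E : ∀ k, DyadicExpansion (K k) (D k)) (n : ι → ℕ)
    (x : ∀ k, Fin (2 ^ n k)) : EuclideanSpace ℝ (∀ k, I k) :=
  tensor fun k => (E k).atom (n k) (x k)

lemma norm_sq_tensorAtom_le (E : ∀ k, DyadicExpansion (K k) (D k)) {n : ι → ℕ}
    (hn : ∀ k, n k < (E k).depth) (x : ∀ k, Fin (2 ^ n k)) :
    ‖tensorAtom E n x‖ ^ 2 ≤ (∏ k, D k) / 8 ^ ∑ k, n k := by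
  rw [tensorAtom, norm_sq_tensor, ← prod_pow_eq_pow_sum, ← prod_div_distrib]
  exact prod_le_prod (fun k _ => sum_nonneg fun i _ => sq_nonneg _)
    fun k _ => (E k).sum_sq_atom_le (n k) (hn k) (x k)

lemma absConvexHull_range_tensor_subset (E : ∀ k, DyadicExpansion (K k) (D k)) :
    absConvexHull ℝ (Set.range fun j : ∀ k, J k => tensor fun k i => K k i (j k)) ⊆
      ∑ n ∈ Fintype.piFinset fun k => range (E k).depth,
        absConvexHull ℝ (Set.range (tensorAtom E n)) := by
  refine absConvexHull_min (Set.range_subset_iff.2 fun j => ?_)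
    (absConvex_sum fun n _ => absConvex_absConvexHull)
  simp only [(E _).kernel_eq, tensor_sum_smul]
  refine Set.finsetSum_mem_finsetSum _ _ _ fun n _ => balanced_absConvexHull.smul_mem ?_
    (subset_absConvexHull ⟨fun k => (E k).block (n k) (j k), rfl⟩)
  rw [Real.norm_eq_abs, abs_prod]
  exact prod_le_one (fun _ _ => abs_nonneg _) fun k _ => (E k).abs_coeff_le (n k) (j k)

end Tensor

section TensorEntropy

variable {p : ℕ} {I J : Fin (p + 1) → Type*} [∀ k, Fintype (I k)] {K : ∀ k, I k → J k → ℝ}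
  {D : Fin (p + 1) → ℝ}

lemma hasEntropyLE_absConvexHull_range_tensorAtom (E : ∀ k, DyadicExpansion (K k) (D k))
    (hD : ∀ k, 0 ≤ D k) {n : Fin (p + 1) → ℕ} (hn : ∀ k, n k < (E k).depth) (n₀ : ℕ) :
    HasEntropyLE (√(∏ k, D k) / 4 ^ n₀ * decay ((∑ k, n k).dist n₀))
      (absConvexHull ℝ (Set.range (tensorAtom E n)))
      (12 * 2 ^ n₀ * decay ((∑ k, n k).dist n₀)) := by
  have hcard : Fintype.card (∀ k, Fin (2 ^ n k)) = 2 ^ ∑ k, n k := by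
    simp [prod_pow_eq_pow_sum]
  refine (hasEntropyLE_absConvexHull_of_card_eq_two_pow hcard (prod_nonneg fun k _ => hD k)
    (norm_sq_tensorAtom_le E hn) n₀).mono ?_ subset_rfl le_rfl
  rw [← div_div, div_eq_mul_one_div _ (2 ^ _), decay]
  gcongr
  linarith [((∑ k, n k).dist n₀).cast_nonneg (α := ℝ)]

theorem hasEntropyLE_absConvexHull_range_tensor (E : ∀ k, DyadicExpansion (K k) (D k))
    (hD : ∀ k, 0 ≤ D k) (n₀ : ℕ) :
    HasEntropyLE (√(∏ k, D k) / 4 ^ n₀ * (decaySum p * ((n₀ : ℝ) + 1) ^ p))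
      (absConvexHull ℝ (Set.range fun j : ∀ k, J k => tensor fun k i => K k i (j k)))
      (12 * 2 ^ n₀ * (decaySum p * ((n₀ : ℝ) + 1) ^ p)) := by
  refine (HasEntropyLE.sum fun n hn => hasEntropyLE_absConvexHull_range_tensorAtom E hD
    (fun k => mem_range.1 (Fintype.mem_piFinset.1 hn k)) n₀).mono ?_
    (absConvexHull_range_tensor_subset E) ?_ <;>
  · rw [← mul_sum]
    gcongr
    exact sum_decay_dist_le _ n₀

end TensorEntropy

section CriticalLevel

variable {p : ℕ} {A X : ℝ}

lemma exists_critical_level (p : ℕ) (hAX : 1 < A * X) :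
    ∃ n : ℕ, 4 ^ n < A * X * ((n : ℝ) + 1) ^ p ∧ A * X * ((n : ℝ) + 2) ^ p ≤ 4 ^ (n + 1) := by
  obtain ⟨n, hn⟩ := pow_unbounded_of_one_lt (A * X * decaySum p) one_lt_two
  have hlarge : A * X * ((n : ℝ) + 1) ^ p ≤ 4 ^ n :=
    calc A * X * ((n : ℝ) + 1) ^ p ≤ A * X * (decaySum p * 2 ^ n) := by
          gcongr
          exact succ_pow_le_decaySum_mul p n
      _ = A * X * decaySum p * 2 ^ n := by ring
      _ ≤ 2 ^ n * 2 ^ n := by gcongr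
      _ = 4 ^ n := by rw [← mul_pow]; norm_num
  obtain ⟨n, hsmall, hlarge⟩ := Nat.exists_not_and_succ_of_not_zero_of_exists
    (p := fun n : ℕ => A * X * ((n : ℝ) + 1) ^ p ≤ 4 ^ n) (by simpa using hAX) ⟨n, hlarge⟩
  refine ⟨n, not_le.1 hsmall, ?_⟩
  rwa [Nat.cast_succ, add_assoc, one_add_one_eq_two] at hlarge

lemma two_pow_lt_of_four_pow_lt {n : ℕ} (hAX : 0 < A * X)
    (hn : 4 ^ n < A * X * ((n : ℝ) + 1) ^ p) : (2 : ℝ) ^ n < A * X * decaySum p := by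
  refine lt_of_mul_lt_mul_right ?_ (by positivity : (0 : ℝ) ≤ 2 ^ n)
  calc (2 : ℝ) ^ n * 2 ^ n = 4 ^ n := by rw [← mul_pow]; norm_num
    _ < A * X * ((n : ℝ) + 1) ^ p := hn
    _ ≤ A * X * (decaySum p * 2 ^ n) := by gcongr; exact succ_pow_le_decaySum_mul p n
    _ = A * X * decaySum p * 2 ^ n := by ring

lemma exists_add_two_le_mul_log {x₀ Q : ℝ} (hx₀ : 1 < x₀) (hQ : 1 ≤ Q) :
    ∃ B : ℝ, 0 < B ∧ ∀ X ≥ x₀, ∀ n : ℕ, (2 : ℝ) ^ n ≤ Q * X → (n : ℝ) + 2 ≤ B * Real.log X := by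
  have hlog2 : 0 < Real.log 2 := Real.log_pos one_lt_two
  have hlogx₀ : 0 < Real.log x₀ := Real.log_pos hx₀
  have hlogQ : 0 ≤ Real.log Q := Real.log_nonneg hQ
  refine ⟨((Real.log Q + 2 * Real.log 2) / Real.log x₀ + 1) / Real.log 2, by positivity,
    fun X hX n hn => ?_⟩
  have hX0 : 0 < X := by linarith
  have hlogX : Real.log x₀ ≤ Real.log X := Real.log_le_log (by linarith) hX
  have hnlog : n * Real.log 2 ≤ Real.log Q + Real.log X := by
    rw [← Real.log_pow, ← Real.log_mul (by positivity) hX0.ne']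
    exact Real.log_le_log (by positivity) hn
  have hconst : Real.log Q + 2 * Real.log 2 ≤
      (Real.log Q + 2 * Real.log 2) / Real.log x₀ * Real.log X := by
    rw [div_mul_eq_mul_div, le_div_iff₀ hlogx₀]
    gcongr
  rw [div_mul_eq_mul_div, le_div_iff₀ hlog2]
  linarith

lemma exists_level_le_mul_rpow_mul_log_rpow (p : ℕ) {x₀ : ℝ} (hx₀ : 1 < x₀) (hA : 1 ≤ A) :
    ∃ C : ℝ, 0 < C ∧ ∀ X ≥ x₀, ∃ n : ℕ, A * X * ((n : ℝ) + 1) ^ p ≤ 4 ^ n ∧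
      2 ^ n * ((n : ℝ) + 1) ^ p ≤ C * (X ^ (1 / 2 : ℝ) * Real.log X ^ (3 * (p : ℝ) / 2)) := by
  obtain ⟨B, hB, hBlog⟩ := exists_add_two_le_mul_log hx₀
    (one_le_mul_of_one_le_of_one_le hA (one_le_decaySum p))
  refine ⟨2 * √(A * B ^ (3 * p)), by positivity, fun X hX => ?_⟩
  have hX1 : 1 < X := hx₀.trans_le hX
  have hlogX : 0 < Real.log X := Real.log_pos hX1
  obtain ⟨n, hsmall, hlarge⟩ := exists_critical_level p (one_lt_mul_of_le_of_lt hA hX1)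
  have hn : (n : ℝ) + 2 ≤ B * Real.log X := by
    refine hBlog X hX n ((two_pow_lt_of_four_pow_lt (by positivity) hsmall).le.trans_eq ?_)
    ring
  have hsq : (2 ^ (n + 1) * ((n : ℝ) + 2) ^ p) ^ 2 ≤
      2 ^ 2 * (A * B ^ (3 * p)) * (X * Real.log X ^ (3 * p)) :=
    calc (2 ^ (n + 1) * ((n : ℝ) + 2) ^ p) ^ 2 = 2 ^ 2 * 4 ^ n * ((n : ℝ) + 2) ^ (2 * p) := by
          rw [show (4 : ℝ) ^ n = 2 ^ n * 2 ^ n by rw [← mul_pow]; norm_num]; ring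
      _ ≤ 2 ^ 2 * (A * X * ((n : ℝ) + 2) ^ p) * ((n : ℝ) + 2) ^ (2 * p) := by
          gcongr
          refine hsmall.le.trans ?_
          gcongr
          norm_num
      _ = 2 ^ 2 * (A * X) * ((n : ℝ) + 2) ^ (3 * p) := by ring
      _ ≤ 2 ^ 2 * (A * X) * (B * Real.log X) ^ (3 * p) := by gcongr
      _ = 2 ^ 2 * (A * B ^ (3 * p)) * (X * Real.log X ^ (3 * p)) := by rw [mul_pow]; ring
  have hrpow : √(Real.log X ^ (3 * p)) = Real.log X ^ (3 * (p : ℝ) / 2) := by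
    rw [Real.sqrt_eq_rpow, ← Real.rpow_natCast, ← Real.rpow_mul hlogX.le]
    push_cast
    ring_nf
  refine ⟨n + 1, ?_, ?_⟩
  · rwa [Nat.cast_succ, add_assoc, one_add_one_eq_two]
  · rw [Nat.cast_succ, add_assoc, one_add_one_eq_two, ← hrpow, ← Real.sqrt_eq_rpow,
      ← Real.sqrt_mul (by positivity)]
    refine (Real.le_sqrt_of_sq_le hsq).trans_eq ?_
    rw [Real.sqrt_mul (by positivity), Real.sqrt_mul (by positivity), Real.sqrt_sq zero_le_two]

end CriticalLevel

section Gset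

open scoped Pointwise

lemma eDist_eq_dist {ι : Type*} [Fintype ι] (θ η : ι → ℝ) :
    eDist θ η = dist (WithLp.toLp 2 θ) (WithLp.toLp 2 η) := by
  simp [eDist, EuclideanSpace.dist_eq, Real.dist_eq]

lemma exists_isNet_eDist {ι : Type*} [Fintype ι] {A : Set (ι → ℝ)} {ε L : ℝ}
    (h : HasEntropyLE ε (WithLp.toLp 2 '' A) L) :
    ∃ T : Finset (ι → ℝ), IsNet eDist ε A T ∧ Real.log #T ≤ L := by
  classical
  obtain ⟨T, hT, hcard⟩ := h
  refine ⟨T.image WithLp.ofLp, fun θ hθ => ?_,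
    (log_natCast_le_log_natCast card_image_le).trans hcard⟩
  obtain ⟨t, ht, hdist⟩ := hT _ (Set.mem_image_of_mem _ hθ)
  exact ⟨t.ofLp, mem_image_of_mem _ ht, by rwa [eDist_eq_dist]⟩

variable {m : ℕ} (a : Fin m → ℕ)

lemma prod_ramp_eq_ite (i j : ∀ k, Fin (a k)) :
    ∏ k, ramp (i k) (j k) =
      if ∀ k, (j k : ℕ) ≤ (i k : ℕ) then ∏ k, (((i k : ℕ) : ℝ) - ((j k : ℕ) : ℝ) + 1) else 0 := by
  split_ifs with hji
  · refine prod_congr rfl fun k _ => ?_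
    have : ((j k : ℕ) : ℝ) ≤ (i k : ℕ) := by exact_mod_cast hji k
    rw [ramp, max_eq_left (by linarith)]
    ring
  · push Not at hji
    obtain ⟨k, hk⟩ := hji
    have : ((i k : ℕ) : ℝ) + 1 ≤ (j k : ℕ) := by exact_mod_cast hk
    exact prod_eq_zero (mem_univ k) (max_eq_right (by linarith))

lemma toLp_Lsq (β : (∀ k, Fin (a k)) → ℝ) :
    WithLp.toLp 2 (Lsq m a β) =
      ∑ j, β j • tensor fun k (i : Fin (a k)) => ramp i (j k) := by
  ext i
  simp only [Lsq, ← prod_ramp_eq_ite, tensor, WithLp.ofLp_sum, WithLp.ofLp_smul, Finset.sum_apply,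
    Pi.smul_apply, smul_eq_mul]
  exact sum_congr rfl fun j _ => mul_comm _ _

lemma toLp_image_Gset_subset (ha : ∀ k, 1 ≤ a k) (S : ℝ) :
    WithLp.toLp 2 '' Gset m a S ⊆ (S / ∏ k, (a k : ℝ)) • absConvexHull ℝ
      (Set.range fun j : ∀ k, Fin (a k) => tensor fun k (i : Fin (a k)) => ramp i (j k)) := by
  have hN : (0 : ℝ) < ∏ k, (a k : ℝ) := prod_pos fun k _ => by exact_mod_cast ha k
  rintro _ ⟨_, ⟨β, hβ, rfl⟩, rfl⟩
  rw [toLp_Lsq]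
  have hcolumn := fun j : ∀ k, Fin (a k) => subset_absConvexHull (𝕜 := ℝ)
    (Set.mem_range_self (f := fun j : ∀ k, Fin (a k) =>
      tensor fun k (i : Fin (a k)) => ramp i (j k)) j)
  refine sum_smul_mem_smul_of_absConvex absConvex_absConvexHull
    ⟨_, hcolumn fun k => ⟨0, ha k⟩⟩ hcolumn ?_
  rwa [le_div_iff₀ hN, mul_comm]

lemma sqrt_prod_sixteen_mul_pow_three {ι : Type*} [Fintype ι] (a : ι → ℕ) :
    √(∏ k, 16 * (a k : ℝ) ^ 3) =
      4 ^ Fintype.card ι * ((∏ k, (a k : ℝ)) * √(∏ k, (a k : ℝ))) := by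
  have hN : (0 : ℝ) ≤ ∏ k, (a k : ℝ) := prod_nonneg fun k _ => (a k).cast_nonneg
  refine (Real.sqrt_eq_iff_mul_self_eq (by positivity) (by positivity)).2 ?_
  rw [prod_mul_distrib, prod_pow, prod_const, card_univ, mul_mul_mul_comm, mul_mul_mul_comm _ √_,
    Real.mul_self_sqrt hN, ← mul_pow]
  norm_num
  ring

lemma hasEntropyLE_toLp_image_Gset {p : ℕ} (a : Fin (p + 1) → ℕ) (ha : ∀ k, 1 ≤ a k) {S : ℝ}
    (hS : 0 ≤ S) (n₀ : ℕ) :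
    HasEntropyLE
      (S * √(∏ k, (a k : ℝ)) * (4 ^ (p + 1) * decaySum p * ((n₀ : ℝ) + 1) ^ p / 4 ^ n₀))
      (WithLp.toLp 2 '' Gset (p + 1) a S)
      (12 * 2 ^ n₀ * (decaySum p * ((n₀ : ℝ) + 1) ^ p)) := by
  have hN : (0 : ℝ) < ∏ k, (a k : ℝ) := prod_pos fun k _ => by exact_mod_cast ha k
  have hhull := hasEntropyLE_absConvexHull_range_tensor (fun k => rampExpansion (a k) (ha k))
    (fun k => by positivity) n₀
  refine (hhull.smul (div_nonneg hS hN.le)).mono (le_of_eq ?_) (toLp_image_Gset_subset a ha S)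
    le_rfl
  rw [sqrt_prod_sixteen_mul_pow_three, Fintype.card_fin]
  field_simp

end Gset

theorem statement5_general (m : ℕ) (hm : 1 ≤ m) {κ : ℝ} (hκ0 : 0 < κ) (hκ1 : κ < 1) :
    ∃ C : ℝ, 0 < C ∧ ∀ a : Fin m → ℕ, (∀ k, 1 ≤ a k) → ∀ S ε : ℝ, 0 < S → 0 < ε →
      ε / (S * (∏ k, (a k : ℝ)) ^ ((1 : ℝ) / 2)) ≤ κ →
      ∃ T : Finset ((∀ k, Fin (a k)) → ℝ),
        IsNet eDist ε (Gset m a S) T ∧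
          Real.log T.card ≤
            C * (S * (∏ k, (a k : ℝ)) ^ ((1 : ℝ) / 2) / ε) ^ ((1 : ℝ) / 2) *
              Real.log (S * (∏ k, (a k : ℝ)) ^ ((1 : ℝ) / 2) / ε) ^ (3 * ((m : ℝ) - 1) / 2) := by
  obtain ⟨p, rfl⟩ := Nat.exists_eq_add_of_le' hm
  have hQ : 1 ≤ decaySum p := one_le_decaySum p
  have hA : 1 ≤ 4 ^ (p + 1) * decaySum p :=
    one_le_mul_of_one_le_of_one_le (one_le_pow₀ (by norm_num)) hQ
  obtain ⟨C, hC, hlevel⟩ := exists_level_le_mul_rpow_mul_log_rpow p ((one_lt_inv₀ hκ0).2 hκ1) hA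
  refine ⟨12 * decaySum p * C, by positivity, fun a ha S ε hS hε hεκ => ?_⟩
  have hN : (0 : ℝ) < ∏ k, (a k : ℝ) := prod_pos fun k _ => by exact_mod_cast ha k
  obtain ⟨n₀, hprecision, hentropy⟩ := hlevel (S * (∏ k, (a k : ℝ)) ^ ((1 : ℝ) / 2) / ε)
    (by rw [ge_iff_le, ← inv_div]; exact inv_anti₀ (by positivity) hεκ)
  refine exists_isNet_eDist ((hasEntropyLE_toLp_image_Gset a ha hS.le n₀).mono ?_ subset_rfl ?_)
  · rw [Real.sqrt_eq_rpow, ← mul_div_assoc, div_le_iff₀ (by positivity)]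
    rw [mul_div_assoc', div_mul_eq_mul_div, div_le_iff₀ hε] at hprecision
    linarith
  · rw [Nat.cast_succ, add_sub_cancel_right]
    calc 12 * 2 ^ n₀ * (decaySum p * ((n₀ : ℝ) + 1) ^ p)
        = 12 * decaySum p * (2 ^ n₀ * ((n₀ : ℝ) + 1) ^ p) := by ring
      _ ≤ 12 * decaySum p * (C * _) := by gcongr
      _ = _ := by ring

/-- Metric entropy bound for `G_m(a₁,…,a_m; S)`:
`log N(ε, G_m) ≤ C_m (S √(a₁⋯a_m)/ε)^{1/2} (log (S √(a₁⋯a_m)/ε))^{3(2m-1)/4}`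
whenever `0 < ε/(S √(a₁⋯a_m)) ≤ κ_m`; when `m = 1` the log factor can be omitted. -/
theorem statement5 (m : ℕ) (hm : 1 ≤ m) :
    ∃ C κ : ℝ, 0 < C ∧ 0 < κ ∧ κ < 1 ∧
      (∀ a : Fin m → ℕ, (∀ k, 1 ≤ a k) → ∀ S ε : ℝ, 0 < S → 0 < ε →
        ε / (S * (∏ k, (a k : ℝ)) ^ ((1 : ℝ) / 2)) ≤ κ →
        ∃ T : Finset ((∀ k, Fin (a k)) → ℝ),
          IsNet eDist ε (Gset m a S) T ∧
            Real.log T.card ≤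
              C * (S * (∏ k, (a k : ℝ)) ^ ((1 : ℝ) / 2) / ε) ^ ((1 : ℝ) / 2) *
                Real.log (S * (∏ k, (a k : ℝ)) ^ ((1 : ℝ) / 2) / ε) ^
                  (3 * (2 * (m : ℝ) - 1) / 4)) ∧
      (m = 1 → ∀ a : Fin m → ℕ, (∀ k, 1 ≤ a k) → ∀ S ε : ℝ, 0 < S → 0 < ε →
        ε / (S * (∏ k, (a k : ℝ)) ^ ((1 : ℝ) / 2)) ≤ κ →
        ∃ T : Finset ((∀ k, Fin (a k)) → ℝ),
          IsNet eDist ε (Gset m a S) T ∧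
            Real.log T.card ≤
              C * (S * (∏ k, (a k : ℝ)) ^ ((1 : ℝ) / 2) / ε) ^ ((1 : ℝ) / 2)) := by
  obtain ⟨C, hC, h⟩ := statement5_general m hm (Real.exp_pos (-1)) (by simp)
  refine ⟨C, Real.exp (-1), hC, Real.exp_pos _, by simp, ?_, ?_⟩
  · intro a ha S ε hS hε hκ
    obtain ⟨T, hT, hcard⟩ := h a ha S ε hS hε hκ
    have hN : (0 : ℝ) < ∏ k, (a k : ℝ) := prod_pos fun k _ => by exact_mod_cast ha k
    have hX : Real.exp 1 ≤ S * (∏ k, (a k : ℝ)) ^ ((1 : ℝ) / 2) / ε := by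
      rw [← inv_div, ← inv_inv (Real.exp 1), ← Real.exp_neg]
      exact inv_anti₀ (by positivity) hκ
    refine ⟨T, hT, hcard.trans ?_⟩
    gcongr ?_ * ?_
    exact Real.rpow_le_rpow_of_exponent_le ((Real.le_log_iff_exp_le (by positivity)).2 hX)
      (by linarith)
  · rintro rfl a ha S ε hS hε hκ
    simpa using h a ha S ε hS hε hκ
end

section
/- Let d ≥ 1, fix design points x^(1),…,x^(n) ∈ [0,1]^d, let y ∈ ℝ^n and V > 0. Consider: (a) minimize ‖y − a₀·1 − Mγ‖₂² over a₀ ∈ ℝ and γ ∈ ℝ^J subject to Σ_{(S,l)∈J, l≠0} |γ_{S,l}| ≤ V; and (b) minimize Σ_{i=1}^n (y_i − f_{a₀,{ν_S}}(x^(i)))² over all MARS representations (a₀,{ν_S}) with V({ν_S}) ≤ V. Then: problem (a) attains its minimum; the fitted vector a₀·1 + Mγ is the same for every minimizer of (a); the optimal values of (a) and (b) coincide; for any minimizer (â₀, γ̂) of (a), the MARS representation consisting of â₀ together with, for each nonempty S, the discrete signed measure μ_S placing mass γ̂_{S,l} at the point (u_{l_k}^(k))_{k∈S} for each l ∈ ∏_{k∈S}{0,…,n_k−1},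 is feasible for (b) and attains its minimum; and every minimizer of (b) has fitted values f(x^(i)) = â₀ + (Mγ̂)_i for all i. -/
open Finset MeasureTheory
open scoped ENNReal

/-- A MARS representation: a constant `a0` together with, for each (nonempty) subset `S`
of coordinates, a finite signed Borel measure on `ℝ^S` concentrated on `Π_{j∈S} [0,1)`. -/
structure MarsRep (d : ℕ) where
  a0 : ℝ
  ν : ∀ S : Finset (Fin d), SignedMeasure ({j // j ∈ S} → ℝ)
  conc : ∀ S : Finset (Fin d),
    (ν S).totalVariation {t : {j // j ∈ S} → ℝ | ∀ j, 0 ≤ t j ∧ t j < 1}ᶜ = 0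

/-- Integration of a real function against a finite signed measure. -/
noncomputable def sIntegral {α : Type*} [MeasurableSpace α]
    (ν : SignedMeasure α) (f : α → ℝ) : ℝ :=
  (∫ t, f t ∂ν.toJordanDecomposition.posPart) -
    (∫ t, f t ∂ν.toJordanDecomposition.negPart)

/-- The function `f_{a₀,{ν_S}}` associated with a MARS representation. -/
noncomputable def marsFun {d : ℕ} (R : MarsRep d) (x : Fin d → ℝ) : ℝ :=
  R.a0 + ∑ S : Finset (Fin d),
    if S.Nonempty then
      sIntegral (R.ν S) fun t => ∏ j : {j // j ∈ S}, max (x j.1 - t j) 0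
    else 0

/-- The variation `V({ν_S}) = Σ_{∅ ≠ S} |ν_S|(Π_{j∈S}[0,1) \ {0})` of a MARS
representation. -/
noncomputable def marsVar {d : ℕ} (R : MarsRep d) : ℝ≥0∞ :=
  ∑ S : Finset (Fin d),
    if S.Nonempty then
      (R.ν S).totalVariation
        ({t : {j // j ∈ S} → ℝ | ∀ j, 0 ≤ t j ∧ t j < 1} \ {fun _ => 0})
    else 0

/-- The parameter space of the finite-dimensional LASSO problem: an intercept `a₀`
together with, for each subset `S` of coordinates, coefficients indexed by
`l ∈ Π_{k∈S} {0,…,n_k−1}`. -/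
abbrev LassoParam (d : ℕ) (m : Fin d → ℕ) :=
  ℝ × ∀ S : Finset (Fin d), (∀ j : {j // j ∈ S}, Fin (m j.1)) → ℝ

/-- The fitted value `a₀ + (Mγ)_i` of the finite-dimensional LASSO model at the `i`-th
design point, where `M_{i,(S,l)} = Π_{k∈S} (x_k^{(i)} − u_{l_k}^{(k)})₊`. -/
noncomputable def fitA (d nn : ℕ) (x : Fin nn → Fin d → ℝ) (m : Fin d → ℕ)
    (u : ∀ k, Fin (m k + 1) → ℝ) (p : LassoParam d m) (i : Fin nn) : ℝ :=
  p.1 + ∑ S : Finset (Fin d),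
    if S.Nonempty then
      ∑ l : ∀ j : {j // j ∈ S}, Fin (m j.1),
        p.2 S l * ∏ j : {j // j ∈ S}, max (x i j.1 - u j.1 ((l j).castSucc)) 0
    else 0

/-- The ℓ¹ penalty `Σ_{(S,l), l ≠ 0} |γ_{S,l}|` of the LASSO problem. -/
noncomputable def penA (d : ℕ) (m : Fin d → ℕ) (p : LassoParam d m) : ℝ :=
  ∑ S : Finset (Fin d),
    if S.Nonempty then
      ∑ l : ∀ j : {j // j ∈ S}, Fin (m j.1),
        if ∀ j, (l j : ℕ) = 0 then 0 else |p.2 S l|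
    else 0

/-- The least-squares objective of the finite-dimensional LASSO problem (a). -/
noncomputable def objA (d nn : ℕ) (x : Fin nn → Fin d → ℝ) (y : Fin nn → ℝ)
    (m : Fin d → ℕ) (u : ∀ k, Fin (m k + 1) → ℝ) (p : LassoParam d m) : ℝ :=
  ∑ i, (y i - fitA d nn x m u p i) ^ 2

/-- The least-squares objective of the infinite-dimensional problem (b). -/
noncomputable def objB (d nn : ℕ) (x : Fin nn → Fin d → ℝ) (y : Fin nn → ℝ)
    (R : MarsRep d) : ℝ :=
  ∑ i, (y i - marsFun R (x i)) ^ 2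

/-!
Interpolating multilinearly on the grid spanned by the design points replaces each measure `ν_S` by
a discrete one at the knots. No knot lies inside a cell of the grid, so the interpolation reproduces
the products `∏ max (x_j - t_j) 0` at the design points, and hence the fitted values. The
interpolation weights are nonnegative with sum at most one, and those of the knots other than the
origin vanish at the origin, so the variation does not increase. Conversely a LASSO parameter is a
discrete MARS representation. Both problems therefore look for the point nearest to `y` in the same
convex set of fitted vectors, which is closed because the penalty ball is the sum of a subspace and
a compact set.
-/

section SignedIntegral

variable {α : Type*} [MeasurableSpace α] {ν : SignedMeasure α} {f : α → ℝ}

theorem sIntegral_eq_integral (hf : Integrable f ν.totalVariation) :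
    sIntegral ν f = ∫ᵛ t, f t ∂<•ν := by
  have hpos : ν.toJordanDecomposition.posPart.toSignedMeasure.Integrable f := by
    simpa [VectorMeasure.Integrable] using
      hf.mono_measure (Measure.le_add_right le_rfl)
  have hneg : ν.toJordanDecomposition.negPart.toSignedMeasure.Integrable f := by
    simpa [VectorMeasure.Integrable] using
      hf.mono_measure (Measure.le_add_left le_rfl)
  conv_rhs => rw [← ν.toSignedMeasure_toJordanDecomposition, JordanDecomposition.toSignedMeasure,
    VectorMeasure.integral_sub_vectorMeasure hpos hneg]
  simp only [VectorMeasure.integral_toSignedMeasure, sIntegral]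

theorem abs_sIntegral_le (hf : Integrable f ν.totalVariation) :
    |sIntegral ν f| ≤ ∫ t, |f t| ∂ν.totalVariation := by
  rw [sIntegral_eq_integral hf, ν.totalVariation_eq_variation]
  simpa using VectorMeasure.norm_integral_le_integral_norm (μ := ν) (f := f)
    (B := (ContinuousLinearMap.lsmul ℝ ℝ).flip)

theorem sIntegral_congr_ae {g : α → ℝ} (hf : Integrable f ν.totalVariation)
    (hfg : f =ᵐ[ν.totalVariation] g) : sIntegral ν f = sIntegral ν g := by
  rw [sIntegral_eq_integral hf, sIntegral_eq_integral (hf.congr hfg)]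
  rw [ν.totalVariation_eq_variation] at hfg
  exact VectorMeasure.integral_congr_ae hfg

theorem sIntegral_sum_mul {ι : Type*} (s : Finset ι) {w : ι → α → ℝ} (c : ι → ℝ)
    (hw : ∀ l ∈ s, Integrable (w l) ν.totalVariation) :
    sIntegral ν (fun t => ∑ l ∈ s, w l t * c l) = ∑ l ∈ s, sIntegral ν (w l) * c l := by
  have hwc : ∀ l ∈ s, Integrable (fun t => w l t * c l) ν.totalVariation :=
    fun l hl => (hw l hl).mul_const (c l)
  rw [sIntegral_eq_integral (integrable_finsetSum _ hwc), VectorMeasure.integral_finsetSum]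
  · refine sum_congr rfl fun l hl => ?_
    simp only [sIntegral_eq_integral (hw l hl), mul_comm _ (c l), ← smul_eq_mul]
    exact VectorMeasure.integral_fun_smul _ _ _ _
  · simpa only [VectorMeasure.Integrable, ν.totalVariation_eq_variation] using hwc

end SignedIntegral

section DiscreteSignedMeasure

variable {ι α : Type*} [Fintype ι] [MeasurableSpace α]

/-- The signed measure placing mass `c l` at the point `pt l`, for each `l`; masses at coinciding
points add up. -/
noncomputable def discreteSignedMeasure (pt : ι → α) (c : ι → ℝ) : SignedMeasure α :=
  ∑ l, VectorMeasure.dirac (pt l) (c l)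

variable (pt : ι → α) (c : ι → ℝ)

theorem discreteSignedMeasure_apply {E : Set α} (hE : MeasurableSet E) :
    discreteSignedMeasure pt c E = ∑ l, E.indicator (fun _ => (1 : ℝ)) (pt l) * c l := by
  rw [discreteSignedMeasure, FunLike.coe_sum, Finset.sum_apply]
  refine sum_congr rfl fun l _ => ?_
  by_cases hl : pt l ∈ E <;> simp [hE, hl]

theorem totalVariation_discreteSignedMeasure_le :
    (discreteSignedMeasure pt c).totalVariation ≤ ∑ l, ‖c l‖ₑ • Measure.dirac (pt l) := by
  rw [SignedMeasure.totalVariation_eq_variation, discreteSignedMeasure]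
  simpa only [VectorMeasure.variation_dirac] using
    VectorMeasure.variation_finsetSum_le univ fun l => VectorMeasure.dirac (pt l) (c l)

theorem totalVariation_discreteSignedMeasure_apply_le {E : Set α} (hE : MeasurableSet E) :
    (discreteSignedMeasure pt c).totalVariation E ≤ ∑ l, E.indicator (fun _ => ‖c l‖ₑ) (pt l) := by
  refine (totalVariation_discreteSignedMeasure_le pt c E).trans_eq ?_
  rw [Measure.finsetSum_apply]
  refine sum_congr rfl fun l _ => ?_
  by_cases hl : pt l ∈ E <;> simp [hE, hl]

theorem ae_discreteSignedMeasure_of_forall {E : Set α} (hE : MeasurableSet E)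
    (hpt : ∀ l, pt l ∈ E) : ∀ᵐ t ∂(discreteSignedMeasure pt c).totalVariation, t ∈ E := by
  refine le_antisymm ((totalVariation_discreteSignedMeasure_apply_le pt c hE.compl).trans_eq ?_)
    zero_le
  exact sum_eq_zero fun l _ => Set.indicator_of_notMem (not_not.2 (hpt l)) _

theorem sIntegral_discreteSignedMeasure [MeasurableSingletonClass α] (f : α → ℝ) :
    sIntegral (discreteSignedMeasure pt c) f = ∑ l, c l * f (pt l) := by
  have hdirac : ∀ l, Integrable f (‖c l‖ₑ • Measure.dirac (pt l)) := fun l =>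
    (integrable_dirac enorm_lt_top).smul_measure enorm_ne_top
  rw [sIntegral_eq_integral, discreteSignedMeasure,
    VectorMeasure.integral_finsetSum_vectorMeasure]
  · simp
  · simpa only [VectorMeasure.Integrable, VectorMeasure.variation_dirac] using
      fun l _ => hdirac l
  · exact ((integrable_finsetSum_measure).2 fun l _ => hdirac l).mono_measure
      (totalVariation_discreteSignedMeasure_le pt c)

end DiscreteSignedMeasure

section Interpolation

variable {m : ℕ} {u : Fin (m + 1) → ℝ} {t : ℝ}

theorem exists_mem_Ico_castSucc_succ (ht : t ∈ Set.Ico (u 0) (u (Fin.last m))) :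
    ∃ j : Fin m, t ∈ Set.Ico (u j.castSucc) (u j.succ) := by
  by_contra! hnot
  have hle : ∀ i, u i ≤ t :=
    Fin.induction ht.1 fun j hj => not_lt.1 fun hlt => hnot j ⟨hj, hlt⟩
  exact (hle (Fin.last m)).not_gt ht.2

/-- The barycentric coordinates of `t` on the cell `[u j, u (j + 1)]` of the grid `u`, as a point
on the line through the vertices `j` and `j + 1` of the standard simplex. -/
noncomputable def cellWeights (u : Fin (m + 1) → ℝ) (j : Fin m) (t : ℝ) : Fin (m + 1) → ℝ :=
  AffineMap.lineMap (k := ℝ) (Pi.single j.castSucc (1 : ℝ) : Fin (m + 1) → ℝ)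
    (Pi.single j.succ (1 : ℝ)) ((t - u j.castSucc) / (u j.succ - u j.castSucc))

/-- The piecewise linear interpolation weights of the point `t` on the grid `u`. They vanish
outside `[u 0, u m)`. -/
noncomputable def interpWeights (u : Fin (m + 1) → ℝ) (t : ℝ) : Fin (m + 1) → ℝ :=
  ∑ j : Fin m, (Set.Ico (u j.castSucc) (u j.succ)).indicator (cellWeights u j) t

theorem measurable_interpWeights (u : Fin (m + 1) → ℝ) : Measurable (interpWeights u) := by
  unfold interpWeights
  refine Finset.measurable_fun_sum _ fun j _ => Measurable.indicator ?_ measurableSet_Ico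
  unfold cellWeights
  simp only [AffineMap.lineMap_apply_module]
  fun_prop

theorem interpWeights_eq_cellWeights (hu : StrictMono u) {j : Fin m}
    (ht : t ∈ Set.Ico (u j.castSucc) (u j.succ)) :
    interpWeights u t = cellWeights u j t := by
  rw [interpWeights, sum_eq_single j]
  · exact Set.indicator_of_mem ht _
  · intro i _ hij
    refine Set.indicator_of_notMem (fun hti => hij ?_) _
    have hi := hu.lt_iff_lt.1 (hti.1.trans_lt ht.2)
    have hj := hu.lt_iff_lt.1 (ht.1.trans_lt hti.2)
    exact le_antisymm (by simpa [Fin.lt_def, Nat.lt_succ_iff] using hi)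
      (by simpa [Fin.lt_def, Nat.lt_succ_iff] using hj)
  · simp

theorem interpWeights_mem_stdSimplex (hu : StrictMono u)
    (ht : t ∈ Set.Ico (u 0) (u (Fin.last m))) :
    interpWeights u t ∈ stdSimplex ℝ (Fin (m + 1)) := by
  obtain ⟨j, hj⟩ := exists_mem_Ico_castSucc_succ ht
  have hpos : 0 < u j.succ - u j.castSucc := sub_pos.2 (hj.1.trans_lt hj.2)
  rw [interpWeights_eq_cellWeights hu hj]
  refine (convex_stdSimplex ℝ _).lineMap_mem (single_mem_stdSimplex ℝ _)
    (single_mem_stdSimplex ℝ _) ⟨div_nonneg (sub_nonneg.2 hj.1) hpos.le, ?_⟩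
  exact (div_le_one hpos).2 (sub_le_sub_right hj.2.le _)

theorem interpWeights_first_eq_zero_of_ne_zero (hu : StrictMono u) {l : Fin (m + 1)} (hl : l ≠ 0) :
    interpWeights u (u 0) l = 0 := by
  cases m with
  | zero => exact absurd (Fin.fin_one_eq_zero l) hl
  | succ m =>
    have hmem : u 0 ∈ Set.Ico (u (Fin.castSucc (0 : Fin (m + 1)))) (u (Fin.succ 0)) :=
      ⟨le_rfl, hu (Fin.succ_pos 0)⟩
    simp [interpWeights_eq_cellWeights hu hmem, cellWeights, hl]

theorem sum_interpWeights_mul (hu : StrictMono u) {j : Fin m}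
    (ht : t ∈ Set.Ico (u j.castSucc) (u j.succ)) (g : Fin (m + 1) → ℝ) :
    ∑ l, interpWeights u t l * g l = AffineMap.lineMap (g j.castSucc) (g j.succ)
      ((t - u j.castSucc) / (u j.succ - u j.castSucc)) := by
  simp only [interpWeights_eq_cellWeights hu ht, cellWeights, AffineMap.lineMap_apply_module,
    Pi.add_apply, Pi.smul_apply, add_mul, sum_add_distrib, smul_eq_mul, mul_assoc, ← mul_sum,
    Pi.single_apply, ite_mul, one_mul, zero_mul, sum_ite_eq', mem_univ, if_true]

theorem sum_interpWeights_mul_max_sub (hu : StrictMono u)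
    (ht : t ∈ Set.Ico (u 0) (u (Fin.last m))) {r : ℝ} (hr : r ∈ Set.range u) :
    ∑ l : Fin m, interpWeights u t l.castSucc * max (r - u l.castSucc) 0 = max (r - t) 0 := by
  obtain ⟨i, rfl⟩ := hr
  obtain ⟨j, hj⟩ := exists_mem_Ico_castSucc_succ ht
  have hpos : 0 < u j.succ - u j.castSucc := sub_pos.2 (hj.1.trans_lt hj.2)
  have hlast : max (u i - u (Fin.last m)) 0 = 0 :=
    max_eq_right (sub_nonpos.2 (hu.monotone i.le_last))
  have hsum := sum_interpWeights_mul hu hj fun l => max (u i - u l) 0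
  rw [Fin.sum_univ_castSucc, hlast, mul_zero, add_zero, AffineMap.lineMap_apply_ring'] at hsum
  rw [hsum]
  -- A knot never lies inside a cell, so the hinge function is affine on the cell of `t`.
  rcases le_or_gt i j.castSucc with hij | hij
  · have hi : u i ≤ u j.castSucc := hu.monotone hij
    simp [hi, hi.trans hj.1, hi.trans (hj.1.trans hj.2.le)]
  · have hi : u j.succ ≤ u i := hu.monotone (Fin.castSucc_lt_iff_succ_le.1 hij)
    rw [max_eq_left (by linarith), max_eq_left (by linarith), max_eq_left (by linarith [hj.2])]
    field_simp
    ring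

end Interpolation

section TensorGrid

variable {T : Type*} {m : T → ℕ} {u : ∀ k, Fin (m k + 1) → ℝ}

/-- The half-open box `∏ k, [u k 0, u k (m k))` spanned by the product grid `u`. -/
def gridBox (u : ∀ k, Fin (m k + 1) → ℝ) : Set (T → ℝ) :=
  Set.univ.pi fun k => Set.Ico (u k 0) (u k (Fin.last (m k)))

theorem measurableSet_gridBox [Countable T] (u : ∀ k, Fin (m k + 1) → ℝ) :
    MeasurableSet (gridBox u) :=
  MeasurableSet.univ_pi fun _ => measurableSet_Ico

/-- The vertex of the product grid `u` with index `l`; as in the LASSO problem, the last knot of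
each coordinate is left out. -/
def gridKnot (u : ∀ k, Fin (m k + 1) → ℝ) (l : ∀ k, Fin (m k)) : T → ℝ :=
  fun k => u k (l k).castSucc

theorem gridKnot_mem_gridBox (hu : ∀ k, StrictMono (u k)) (l : ∀ k, Fin (m k)) :
    gridKnot u l ∈ gridBox u := fun k _ =>
  ⟨(hu k).monotone (Fin.zero_le _), hu k (Fin.castSucc_lt_last (l k))⟩

variable [Fintype T]

/-- The weight of the vertex `gridKnot u l` in the multilinear interpolation of `t` on the product
grid `u`. -/
noncomputable def gridWeight (u : ∀ k, Fin (m k + 1) → ℝ) (l : ∀ k, Fin (m k)) (t : T → ℝ) : ℝ :=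
  ∏ k, interpWeights (u k) (t k) (l k).castSucc

theorem measurable_gridWeight (u : ∀ k, Fin (m k + 1) → ℝ) (l : ∀ k, Fin (m k)) :
    Measurable (gridWeight u l) :=
  Finset.measurable_fun_prod _ fun k _ => (measurable_pi_apply _).comp
    ((measurable_interpWeights (u k)).comp (measurable_pi_apply k))

theorem gridWeight_nonneg (hu : ∀ k, StrictMono (u k)) (l : ∀ k, Fin (m k)) {t : T → ℝ}
    (ht : t ∈ gridBox u) : 0 ≤ gridWeight u l t :=
  prod_nonneg fun k _ => (interpWeights_mem_stdSimplex (hu k) (ht k trivial)).1 _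

theorem gridWeight_le_one (hu : ∀ k, StrictMono (u k)) (l : ∀ k, Fin (m k)) {t : T → ℝ}
    (ht : t ∈ gridBox u) : gridWeight u l t ≤ 1 := by
  have hsimplex k := interpWeights_mem_stdSimplex (hu k) (ht k trivial)
  exact prod_le_one (fun k _ => (hsimplex k).1 _) fun k _ =>
    (mem_Icc_of_mem_stdSimplex (hsimplex k) _).2

theorem gridWeight_corner_eq_zero (hu : ∀ k, StrictMono (u k)) {l : ∀ k, Fin (m k)}
    (hl : ¬ ∀ k, (l k : ℕ) = 0) : gridWeight u l (fun k => u k 0) = 0 := by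
  obtain ⟨k, hk⟩ := not_forall.1 hl
  refine prod_eq_zero (mem_univ k) (interpWeights_first_eq_zero_of_ne_zero (hu k) ?_)
  simpa [Fin.ext_iff] using hk

theorem integrable_gridWeight (hu : ∀ k, StrictMono (u k)) (l : ∀ k, Fin (m k))
    {μ : Measure (T → ℝ)} [IsFiniteMeasure μ] (hμ : ∀ᵐ t ∂μ, t ∈ gridBox u) :
    Integrable (gridWeight u l) μ := by
  refine .of_bound (measurable_gridWeight u l).aestronglyMeasurable 1 ?_
  filter_upwards [hμ] with t ht
  rw [Real.norm_of_nonneg (gridWeight_nonneg hu l ht)]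
  exact gridWeight_le_one hu l ht

variable [DecidableEq T]

theorem sum_gridWeight_le_one (hu : ∀ k, StrictMono (u k)) {t : T → ℝ} (ht : t ∈ gridBox u) :
    ∑ l, gridWeight u l t ≤ 1 := by
  have hsimplex k := interpWeights_mem_stdSimplex (hu k) (ht k trivial)
  have hprod : ∏ k, ∑ l : Fin (m k), interpWeights (u k) (t k) l.castSucc =
      ∑ l, gridWeight u l t := by
    simp only [Fintype.prod_sum, gridWeight]
  rw [← hprod]
  refine prod_le_one (fun k _ => sum_nonneg fun l _ => (hsimplex k).1 _) fun k _ => ?_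
  rw [← (hsimplex k).2, Fin.sum_univ_castSucc]
  exact le_add_of_nonneg_right ((hsimplex k).1 _)

theorem sum_gridWeight_mul_prod_max_sub (hu : ∀ k, StrictMono (u k)) {t r : T → ℝ}
    (ht : t ∈ gridBox u) (hr : ∀ k, r k ∈ Set.range (u k)) :
    ∑ l, gridWeight u l t * ∏ k, max (r k - gridKnot u l k) 0 = ∏ k, max (r k - t k) 0 := by
  calc ∑ l, gridWeight u l t * ∏ k, max (r k - gridKnot u l k) 0
      = ∏ k, ∑ l : Fin (m k), interpWeights (u k) (t k) l.castSucc *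
          max (r k - u k l.castSucc) 0 := by
        simp only [Fintype.prod_sum, gridWeight, gridKnot, prod_mul_distrib]
    _ = ∏ k, max (r k - t k) 0 := prod_congr rfl fun k _ =>
        sum_interpWeights_mul_max_sub (hu k) (ht k trivial) (hr k)

theorem sum_integral_abs_gridWeight_le (hu : ∀ k, StrictMono (u k))
    {μ : Measure (T → ℝ)} [IsFiniteMeasure μ] (hμ : ∀ᵐ t ∂μ, t ∈ gridBox u) :
    ∑ l with ¬ ∀ k, (l k : ℕ) = 0, ∫ t, |gridWeight u l t| ∂μ ≤
      μ.real (gridBox u \ {fun k => u k 0}) := by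
  have hint l : Integrable (fun t => |gridWeight u l t|) μ := (integrable_gridWeight hu l hμ).abs
  have hmeas : MeasurableSet (gridBox u \ {fun k => u k 0}) :=
    (measurableSet_gridBox u).diff (measurableSet_singleton _)
  rw [← integral_finsetSum _ fun l _ => hint l, ← integral_indicator_one hmeas]
  refine integral_mono_ae (integrable_finsetSum _ fun l _ => hint l)
    ((integrable_const 1).indicator hmeas) ?_
  filter_upwards [hμ] with t ht
  by_cases hcorner : t = fun k => u k 0
  · subst hcorner
    simp only [Set.mem_sdiff, Set.mem_singleton_iff, not_true_eq_false, and_false,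
      not_false_eq_true, Set.indicator_of_notMem]
    exact (sum_eq_zero fun l hl => by
      rw [gridWeight_corner_eq_zero hu (mem_filter.1 hl).2, abs_zero]).le
  · rw [Set.indicator_of_mem (show t ∈ gridBox u \ _ from ⟨ht, hcorner⟩), Pi.one_apply]
    simp only [abs_of_nonneg (gridWeight_nonneg hu _ ht)]
    exact (sum_le_univ_sum_of_nonneg fun l => gridWeight_nonneg hu l ht).trans
      (sum_gridWeight_le_one hu ht)

variable {ν : SignedMeasure (T → ℝ)}

theorem sum_abs_sIntegral_gridWeight_le (hu : ∀ k, StrictMono (u k))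
    (hν : ∀ᵐ t ∂ν.totalVariation, t ∈ gridBox u) :
    ∑ l with ¬ ∀ k, (l k : ℕ) = 0, |sIntegral ν (gridWeight u l)| ≤
      ν.totalVariation.real (gridBox u \ {fun k => u k 0}) :=
  (sum_le_sum fun l _ => abs_sIntegral_le (integrable_gridWeight hu l hν)).trans
    (sum_integral_abs_gridWeight_le hu hν)

theorem sIntegral_prod_max_sub_eq_sum (hu : ∀ k, StrictMono (u k))
    (hν : ∀ᵐ t ∂ν.totalVariation, t ∈ gridBox u) {r : T → ℝ} (hr : ∀ k, r k ∈ Set.range (u k)) :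
    sIntegral ν (fun t => ∏ k, max (r k - t k) 0) =
      ∑ l, sIntegral ν (gridWeight u l) * ∏ k, max (r k - gridKnot u l k) 0 := by
  have hw l := integrable_gridWeight hu l hν
  rw [← sIntegral_sum_mul _ _ fun l _ => hw l]
  refine (sIntegral_congr_ae (integrable_finsetSum _ fun l _ => (hw l).mul_const _) ?_).symm
  filter_upwards [hν] with t ht using sum_gridWeight_mul_prod_max_sub hu ht hr

theorem totalVariation_discreteSignedMeasure_gridBox_diff_le (c : (∀ k, Fin (m k)) → ℝ) :
    (discreteSignedMeasure (gridKnot u) c).totalVariation (gridBox u \ {fun k => u k 0}) ≤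
      ENNReal.ofReal (∑ l with ¬ ∀ k, (l k : ℕ) = 0, |c l|) := by
  have hmeas : MeasurableSet (gridBox u \ {fun k => u k 0}) :=
    (measurableSet_gridBox u).diff (measurableSet_singleton _)
  refine (totalVariation_discreteSignedMeasure_apply_le _ c hmeas).trans ?_
  rw [ENNReal.ofReal_sum_of_nonneg fun l _ => abs_nonneg _, sum_filter]
  refine sum_le_sum fun l _ => ?_
  split_ifs with hl
  · have hcorner : gridKnot u l = fun k => u k 0 := funext fun k =>
      congrArg (u k) (Fin.ext (hl k))
    simp [hcorner]
  · exact (Set.indicator_le_self _ _ _).trans_eq (Real.enorm_eq_ofReal_abs _)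

end TensorGrid

section SeminormBall

variable {E H : Type*} [AddCommGroup E] [Module ℝ E]
  [NormedAddCommGroup H] [NormedSpace ℝ H]

/-- The null space of a seminorm. -/
def seminormKer (p : Seminorm ℝ E) : Submodule ℝ E where
  carrier := {v | p v = 0}
  zero_mem' := map_zero p
  add_mem' {v w} hv hw := le_antisymm ((map_add_le_add p v w).trans_eq (by rw [hv, hw, add_zero]))
    (apply_nonneg p _)
  smul_mem' c v hv := by rw [Set.mem_ofPred_eq, map_smul_eq_mul, hv, mul_zero]

theorem seminorm_add_of_mem_seminormKer (p : Seminorm ℝ E) {v : E} (hv : v ∈ seminormKer p)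
    (w : E) : p (v + w) = p w := by
  have hv : p v = 0 := hv
  refine le_antisymm ((map_add_le_add p v w).trans_eq (by rw [hv, zero_add])) ?_
  calc p w = p (v + w - v) := by rw [add_sub_cancel_left]
    _ ≤ p (v + w) + p v := map_sub_le_add p _ _
    _ = p (v + w) := by rw [hv, add_zero]

variable [FiniteDimensional ℝ E] (F : E →ₗ[ℝ] H) (r : ℝ)

theorem isCompact_image_seminorm_closedBall_of_definite {p : Seminorm ℝ E}
    (hp : ∀ v, p v = 0 → v = 0) : IsCompact (F '' p.closedBall 0 r) := by
  let : Norm E := ⟨p⟩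
  have core : NormedSpace.Core ℝ E :=
    { norm_nonneg := apply_nonneg p
      norm_smul := map_smul_eq_mul p
      norm_triangle := map_add_le_add p
      norm_eq_zero_iff := fun v => ⟨hp v, fun hv => hv ▸ map_zero p⟩ }
  let := NormedAddCommGroup.ofCore core
  let := NormedSpace.ofCore core
  have : ProperSpace E := FiniteDimensional.proper_real E
  have hball : p.closedBall 0 r = Metric.closedBall 0 r := by
    ext v
    rw [Seminorm.mem_closedBall_zero, mem_closedBall_zero_iff]
    rfl
  rw [hball]
  exact (isCompact_closedBall 0 r).image F.continuous_of_finiteDimensional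

/-- The ball is the sum of the null space and a compact ball in a complement of it, so its image is
the sum of a subspace and a compact set. -/
theorem isClosed_image_seminorm_closedBall (p : Seminorm ℝ E) :
    IsClosed (F '' p.closedBall 0 r) := by
  obtain ⟨W, hW⟩ := (seminormKer p).exists_isCompl
  have hdef : ∀ w : W, p.comp W.subtype w = 0 → w = 0 := fun w hw =>
    Subtype.ext (hW.disjoint.le_bot ⟨hw, w.2⟩)
  have hcompact := isCompact_image_seminorm_closedBall_of_definite (F ∘ₗ W.subtype) r hdef
  have hker := ((seminormKer p).map F).closed_of_finiteDimensional
  convert hker.add_right_of_isCompact hcompact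
  ext z
  simp only [Set.mem_image, Set.mem_add, Seminorm.mem_closedBall_zero]
  constructor
  · rintro ⟨v, hv, rfl⟩
    obtain ⟨a, ha, b, hb, rfl⟩ := Submodule.mem_sup.1 (hW.sup_eq_top ▸ Submodule.mem_top (x := v))
    rw [seminorm_add_of_mem_seminormKer p ha] at hv
    exact ⟨F a, ⟨a, ha, rfl⟩, F b, ⟨⟨b, hb⟩, hv, rfl⟩, (map_add F a b).symm⟩
  · rintro ⟨_, ⟨a, ha, rfl⟩, _, ⟨b, hb, rfl⟩, rfl⟩
    exact ⟨a + b, (seminorm_add_of_mem_seminormKer p ha b).trans_le hb, map_add F a b⟩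

end SeminormBall

section NearestPoint

variable {H : Type*} [NormedAddCommGroup H] [NormedSpace ℝ H] [StrictConvexSpace ℝ H]

theorem eq_of_isMinOn_dist_of_convex {K : Set H} (hK : Convex ℝ K) {y a b : H} (ha : a ∈ K)
    (hb : b ∈ K) (hamin : IsMinOn (dist y) K a) (hbmin : IsMinOn (dist y) K b) : a = b := by
  by_contra hab
  have hdist : dist y b = dist y a := le_antisymm (hbmin ha) (hamin hb)
  have hmem := combo_mem_ball_of_ne (r := dist y a) (z := y) (by simp [dist_comm])
    (by simp [← hdist, dist_comm]) hab (one_half_pos (α := ℝ)) (one_half_pos (α := ℝ))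
    (add_halves 1)
  rw [Metric.mem_ball'] at hmem
  exact hmem.not_ge (hamin (hK ha hb (by norm_num) (by norm_num) (add_halves 1)))

end NearestPoint

section Lasso

variable {d nn : ℕ} {m : Fin d → ℕ}

theorem penA_eq_sum_filter (p : LassoParam d m) :
    penA d m p = ∑ S with S.Nonempty, ∑ l with ¬ ∀ j, (l j : ℕ) = 0, |p.2 S l| := by
  simp only [penA, sum_filter, ite_not]

/-- The LASSO penalty `penA`, bundled as a seminorm. -/
noncomputable def penSeminorm (d : ℕ) (m : Fin d → ℕ) : Seminorm ℝ (LassoParam d m) :=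
  .of (penA d m)
    (fun p q => by
      simp only [penA_eq_sum_filter, ← sum_add_distrib]
      exact sum_le_sum fun S _ => sum_le_sum fun l _ => abs_add_le _ _)
    (fun c p => by
      simp only [penA_eq_sum_filter, mul_sum]
      exact sum_congr rfl fun S _ => sum_congr rfl fun l _ => abs_mul _ _)

/-- The map `(a₀, γ) ↦ a₀·1 + Mγ` from LASSO parameters to fitted vectors, bundled as a linear map
into Euclidean space. -/
noncomputable def fitLinearMap (x : Fin nn → Fin d → ℝ) (u : ∀ k, Fin (m k + 1) → ℝ) :
    LassoParam d m →ₗ[ℝ] EuclideanSpace ℝ (Fin nn) where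
  toFun p := WithLp.toLp 2 (fitA d nn x m u p)
  map_add' p q := by
    ext i
    simp only [fitA, ← sum_filter, Prod.fst_add, Prod.snd_add, Pi.add_apply, PiLp.add_apply,
      add_mul, sum_add_distrib]
    ring
  map_smul' c p := by
    ext i
    simp only [fitA, ← sum_filter, Prod.smul_fst, Prod.smul_snd, Pi.smul_apply, PiLp.smul_apply,
      smul_eq_mul, RingHom.id_apply, mul_add, mul_sum, mul_assoc]

variable (x : Fin nn → Fin d → ℝ) (y : Fin nn → ℝ) (V : ℝ) (u : ∀ k, Fin (m k + 1) → ℝ)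

theorem objA_eq_dist_sq (p : LassoParam d m) :
    objA d nn x y m u p = dist (WithLp.toLp 2 y) (fitLinearMap x u p) ^ 2 := by
  rw [EuclideanSpace.dist_eq, Real.sq_sqrt (sum_nonneg fun i _ => sq_nonneg _)]
  simp only [Real.dist_eq, sq_abs]
  rfl

theorem objA_le_objA_iff {p q : LassoParam d m} :
    objA d nn x y m u p ≤ objA d nn x y m u q ↔
      dist (WithLp.toLp 2 y) (fitLinearMap x u p) ≤
        dist (WithLp.toLp 2 y) (fitLinearMap x u q) := by
  rw [objA_eq_dist_sq, objA_eq_dist_sq, sq_le_sq₀ dist_nonneg dist_nonneg]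

/-- `p` solves the LASSO problem (a). -/
def IsLassoMin (p : LassoParam d m) : Prop :=
  penA d m p ≤ V ∧
    ∀ q : LassoParam d m, penA d m q ≤ V → objA d nn x y m u p ≤ objA d nn x y m u q

/-- The fitted vectors of the parameters feasible for the LASSO problem (a). -/
def fittedVectors : Set (EuclideanSpace ℝ (Fin nn)) :=
  fitLinearMap x u '' (penSeminorm d m).closedBall 0 V

variable {x y V u}

theorem fitLinearMap_mem_fittedVectors {p : LassoParam d m} (hp : penA d m p ≤ V) :
    fitLinearMap x u p ∈ fittedVectors x V u :=
  Set.mem_image_of_mem _ ((penSeminorm d m).mem_closedBall_zero.2 hp)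

theorem isLassoMin_iff {p : LassoParam d m} :
    IsLassoMin x y V u p ↔ penA d m p ≤ V ∧
      IsMinOn (dist (WithLp.toLp 2 y)) (fittedVectors x V u) (fitLinearMap x u p) := by
  simp only [IsLassoMin, isMinOn_iff, fittedVectors, Set.forall_mem_image, objA_le_objA_iff,
    Seminorm.mem_closedBall_zero]
  rfl

variable (x y u) in
theorem exists_isLassoMin (hV : 0 ≤ V) : ∃ p, IsLassoMin x y V u p := by
  have hclosed : IsClosed (fittedVectors x V u) :=
    isClosed_image_seminorm_closedBall (fitLinearMap x u) V (penSeminorm d m)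
  have hne : (fittedVectors x V u).Nonempty :=
    ⟨_, Set.mem_image_of_mem _ ((penSeminorm d m).mem_closedBall_self hV)⟩
  obtain ⟨_, ⟨p, hp, rfl⟩, hdist⟩ := hclosed.exists_infDist_eq_dist hne (WithLp.toLp 2 y)
  exact ⟨p, isLassoMin_iff.2 ⟨(penSeminorm d m).mem_closedBall_zero.1 hp,
    fun z hz => hdist.symm.trans_le (Metric.infDist_le_dist_of_mem hz)⟩⟩

theorem IsLassoMin.fitA_eq {p q : LassoParam d m} (hp : IsLassoMin x y V u p)
    (hq : IsLassoMin x y V u q) : fitA d nn x m u p = fitA d nn x m u q := by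
  rw [isLassoMin_iff] at hp hq
  have hconvex : Convex ℝ (fittedVectors x V u) :=
    ((penSeminorm d m).convex_closedBall 0 V).linear_image (fitLinearMap x u)
  exact WithLp.toLp_injective 2 (eq_of_isMinOn_dist_of_convex hconvex
    (fitLinearMap_mem_fittedVectors hp.1) (fitLinearMap_mem_fittedVectors hq.1) hp.2 hq.2)

end Lasso

section Mars

/-- `u` is a product grid in the unit cube: in each coordinate, `u k` lists knots in increasing
order from `0` to `1`. -/
structure IsUnitGrid {T : Type*} {m : T → ℕ} (u : ∀ k, Fin (m k + 1) → ℝ) : Prop where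
  strictMono : ∀ k, StrictMono (u k)
  first : ∀ k, u k 0 = 0
  last : ∀ k, u k (Fin.last (m k)) = 1

theorem IsUnitGrid.comp {T T' : Type*} {m : T → ℕ} {u : ∀ k, Fin (m k + 1) → ℝ}
    (hu : IsUnitGrid u) (g : T' → T) : IsUnitGrid fun k => u (g k) :=
  ⟨fun k => hu.strictMono (g k), fun k => hu.first (g k), fun k => hu.last (g k)⟩

theorem IsUnitGrid.gridBox_eq {T : Type*} {m : T → ℕ} {u : ∀ k, Fin (m k + 1) → ℝ}
    (hu : IsUnitGrid u) : gridBox u = {t | ∀ k, 0 ≤ t k ∧ t k < 1} := by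
  ext t
  simp [gridBox, hu.first, hu.last]

variable {d nn : ℕ} {m : Fin d → ℕ} {u : ∀ k, Fin (m k + 1) → ℝ}

theorem MarsRep.ae_mem_gridBox (R : MarsRep d) (hu : IsUnitGrid u) (S : Finset (Fin d)) :
    ∀ᵐ t ∂(R.ν S).totalVariation, t ∈ gridBox fun j : S => u j := by
  rw [(hu.comp _).gridBox_eq]
  exact R.conc S

/-- The LASSO parameter obtained from a MARS representation by replacing each measure `ν_S` with its
projection to the grid: the coefficient at a knot is the `ν_S`-integral of the weight of that
knot. -/
noncomputable def lassoOfMars (u : ∀ k, Fin (m k + 1) → ℝ) (R : MarsRep d) : LassoParam d m :=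
  (R.a0, fun S l => sIntegral (R.ν S) (gridWeight (fun j : S => u j) l))

theorem marsVar_eq_sum_filter (R : MarsRep d) (hu : IsUnitGrid u) :
    marsVar R = ∑ S with S.Nonempty,
      (R.ν S).totalVariation (gridBox (fun j : S => u j) \ {fun j : S => u j 0}) := by
  simp only [marsVar, sum_filter, (hu.comp _).gridBox_eq, hu.first]

theorem penA_lassoOfMars_le (hu : IsUnitGrid u) (R : MarsRep d) :
    penA d m (lassoOfMars u R) ≤ (marsVar R).toReal := by
  rw [penA_eq_sum_filter, marsVar_eq_sum_filter R hu,
    ENNReal.toReal_sum fun S _ => measure_ne_top _ _]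
  exact sum_le_sum fun S _ =>
    sum_abs_sIntegral_gridWeight_le (hu.comp _).strictMono (R.ae_mem_gridBox hu S)

theorem fitA_lassoOfMars (hu : IsUnitGrid u) (R : MarsRep d) {x : Fin nn → Fin d → ℝ} {i : Fin nn}
    (hx : ∀ k, x i k ∈ Set.range (u k)) :
    fitA d nn x m u (lassoOfMars u R) i = marsFun R (x i) := by
  simp only [fitA, marsFun, lassoOfMars]
  congr! 3 with S
  exact (sIntegral_prod_max_sub_eq_sum (hu.comp _).strictMono (R.ae_mem_gridBox hu S)
    fun j => hx j).symm

/-- The MARS representation `(a₀, {μ_S})` of a LASSO parameter `(a₀, γ)`, where `μ_S` places mass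
`γ_{S,l}` at the knot with index `l`. -/
noncomputable def marsOfLasso (hu : IsUnitGrid u) (p : LassoParam d m) : MarsRep d where
  a0 := p.1
  ν S := discreteSignedMeasure (gridKnot fun j : S => u j) (p.2 S)
  conc S := by
    rw [← (hu.comp _).gridBox_eq]
    exact ae_discreteSignedMeasure_of_forall _ _ (measurableSet_gridBox _)
      (gridKnot_mem_gridBox (hu.comp _).strictMono)

theorem marsVar_marsOfLasso_le (hu : IsUnitGrid u) (p : LassoParam d m) :
    marsVar (marsOfLasso hu p) ≤ ENNReal.ofReal (penA d m p) := by
  rw [marsVar_eq_sum_filter _ hu, penA_eq_sum_filter,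
    ENNReal.ofReal_sum_of_nonneg fun S _ => sum_nonneg fun l _ => abs_nonneg _]
  exact sum_le_sum fun S _ =>
    totalVariation_discreteSignedMeasure_gridBox_diff_le (u := fun j : S => u j) (p.2 S)

theorem marsFun_marsOfLasso (hu : IsUnitGrid u) (p : LassoParam d m) (x : Fin nn → Fin d → ℝ)
    (i : Fin nn) : marsFun (marsOfLasso hu p) (x i) = fitA d nn x m u p i := by
  simp only [fitA, marsFun, marsOfLasso, sIntegral_discreteSignedMeasure, gridKnot]

/-- `R` solves the infinite-dimensional problem (b). -/
def IsMarsMin (x : Fin nn → Fin d → ℝ) (y : Fin nn → ℝ) (V : ℝ) (R : MarsRep d) : Prop :=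
  marsVar R ≤ ENNReal.ofReal V ∧
    ∀ R' : MarsRep d, marsVar R' ≤ ENNReal.ofReal V → objB d nn x y R ≤ objB d nn x y R'

section Equivalence

variable {x : Fin nn → Fin d → ℝ} {y : Fin nn → ℝ} {V : ℝ}

theorem objB_marsOfLasso (hu : IsUnitGrid u) (p : LassoParam d m) :
    objB d nn x y (marsOfLasso hu p) = objA d nn x y m u p := by
  simp only [objA, objB, marsFun_marsOfLasso]

theorem marsVar_marsOfLasso_le_of_penA_le (hu : IsUnitGrid u) {p : LassoParam d m}
    (hp : penA d m p ≤ V) : marsVar (marsOfLasso hu p) ≤ ENNReal.ofReal V :=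
  (marsVar_marsOfLasso_le hu p).trans (ENNReal.ofReal_le_ofReal hp)

theorem penA_lassoOfMars_le_of_marsVar_le (hu : IsUnitGrid u) (hV : 0 ≤ V) {R : MarsRep d}
    (hR : marsVar R ≤ ENNReal.ofReal V) : penA d m (lassoOfMars u R) ≤ V :=
  (penA_lassoOfMars_le hu R).trans (ENNReal.toReal_le_of_le_ofReal hV hR)

theorem objA_lassoOfMars (hu : IsUnitGrid u) (hx : ∀ i k, x i k ∈ Set.range (u k))
    (R : MarsRep d) : objA d nn x y m u (lassoOfMars u R) = objB d nn x y R := by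
  simp only [objA, objB, fitA_lassoOfMars hu R (hx _)]

theorem IsLassoMin.isMarsMin_marsOfLasso (hu : IsUnitGrid u) (hV : 0 ≤ V)
    (hx : ∀ i k, x i k ∈ Set.range (u k)) {p : LassoParam d m} (hp : IsLassoMin x y V u p) :
    IsMarsMin x y V (marsOfLasso hu p) := by
  refine ⟨marsVar_marsOfLasso_le_of_penA_le hu hp.1, fun R hR => ?_⟩
  rw [objB_marsOfLasso, ← objA_lassoOfMars hu hx]
  exact hp.2 _ (penA_lassoOfMars_le_of_marsVar_le hu hV hR)

theorem IsMarsMin.isLassoMin_lassoOfMars (hu : IsUnitGrid u) (hV : 0 ≤ V)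
    (hx : ∀ i k, x i k ∈ Set.range (u k)) {R : MarsRep d} (hR : IsMarsMin x y V R) :
    IsLassoMin x y V u (lassoOfMars u R) := by
  refine ⟨penA_lassoOfMars_le_of_marsVar_le hu hV hR.1, fun p hp => ?_⟩
  rw [objA_lassoOfMars hu hx, ← objB_marsOfLasso hu]
  exact hR.2 _ (marsVar_marsOfLasso_le_of_penA_le hu hp)

end Equivalence

end Mars

theorem statement10_general {d nn : ℕ} (x : Fin nn → Fin d → ℝ) (y : Fin nn → ℝ) {V : ℝ}
    (hV : 0 ≤ V) {m : Fin d → ℕ} {u : ∀ k, Fin (m k + 1) → ℝ} (hu : IsUnitGrid u)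
    (hx : ∀ i k, x i k ∈ Set.range (u k)) :
    (∃ p, IsLassoMin x y V u p) ∧
    (∀ p q, IsLassoMin x y V u p → IsLassoMin x y V u q →
      ∀ i, fitA d nn x m u p i = fitA d nn x m u q i) ∧
    (∀ p, IsLassoMin x y V u p → ∃ R : MarsRep d, R.a0 = p.1 ∧
      (∀ S : Finset (Fin d), S.Nonempty → ∀ E : Set (S → ℝ), MeasurableSet E →
        R.ν S E = ∑ l : ∀ j : S, Fin (m j),
          Set.indicator E (fun _ => (1 : ℝ)) (fun j => u j ((l j).castSucc)) * p.2 S l) ∧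
      marsVar R ≤ ENNReal.ofReal V ∧
      (∀ R' : MarsRep d, marsVar R' ≤ ENNReal.ofReal V → objB d nn x y R ≤ objB d nn x y R') ∧
      objA d nn x y m u p = objB d nn x y R ∧
      (∀ R' : MarsRep d, marsVar R' ≤ ENNReal.ofReal V →
        (∀ R'' : MarsRep d, marsVar R'' ≤ ENNReal.ofReal V →
          objB d nn x y R' ≤ objB d nn x y R'') →
        ∀ i, marsFun R' (x i) = fitA d nn x m u p i)) := by
  refine ⟨exists_isLassoMin x y u hV, fun p q hp hq => congr_fun (hp.fitA_eq hq), fun p hp => ?_⟩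
  have hmars := hp.isMarsMin_marsOfLasso hu hV hx
  refine ⟨marsOfLasso hu p, rfl, fun S _ E hE => discreteSignedMeasure_apply _ _ hE, hmars.1,
    hmars.2, (objB_marsOfLasso hu p).symm, fun R hR hRmin i => ?_⟩
  have hlasso := IsMarsMin.isLassoMin_lassoOfMars hu hV hx ⟨hR, hRmin⟩
  rw [← fitA_lassoOfMars hu R (hx i)]
  exact congr_fun (hlasso.fitA_eq hp) i

/-- Equivalence of the finite-dimensional LASSO problem (a) and the
infinite-dimensional MARS problem (b): (a) attains its minimum; the fitted vector is the
same for every minimizer of (a); for any minimizer of (a), the induced discrete MARS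
representation is feasible for (b), attains its minimum, the optimal values coincide,
and every minimizer of (b) has the same fitted values `â₀ + (Mγ̂)_i`. -/
theorem statement10 (d : ℕ) (hd : 1 ≤ d) (nn : ℕ) (x : Fin nn → Fin d → ℝ)
    (hx : ∀ i k, x i k ∈ Set.Icc (0 : ℝ) 1) (y : Fin nn → ℝ) (V : ℝ) (hV : 0 < V)
    (m : Fin d → ℕ) (u : ∀ k, Fin (m k + 1) → ℝ)
    (humono : ∀ k, StrictMono (u k)) (hu0 : ∀ k, u k 0 = 0)
    (hu1 : ∀ k, u k (Fin.last (m k)) = 1)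
    (hurange : ∀ k, Set.range (u k) = {r : ℝ | r = 0 ∨ r = 1 ∨ ∃ i, x i k = r}) :
    (∃ p : LassoParam d m, penA d m p ≤ V ∧
        ∀ q : LassoParam d m, penA d m q ≤ V →
          objA d nn x y m u p ≤ objA d nn x y m u q) ∧
    (∀ p q : LassoParam d m,
      (penA d m p ≤ V ∧ ∀ r : LassoParam d m, penA d m r ≤ V →
        objA d nn x y m u p ≤ objA d nn x y m u r) →
      (penA d m q ≤ V ∧ ∀ r : LassoParam d m, penA d m r ≤ V →
        objA d nn x y m u q ≤ objA d nn x y m u r) →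
      ∀ i, fitA d nn x m u p i = fitA d nn x m u q i) ∧
    (∀ p : LassoParam d m,
      (penA d m p ≤ V ∧ ∀ r : LassoParam d m, penA d m r ≤ V →
        objA d nn x y m u p ≤ objA d nn x y m u r) →
      ∃ R : MarsRep d, R.a0 = p.1 ∧
        (∀ S : Finset (Fin d), S.Nonempty →
          ∀ E : Set ({j // j ∈ S} → ℝ), MeasurableSet E →
            R.ν S E = ∑ l : ∀ j : {j // j ∈ S}, Fin (m j.1),
              Set.indicator E (fun _ => (1 : ℝ))
                  (fun j => u j.1 ((l j).castSucc)) * p.2 S l) ∧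
        marsVar R ≤ ENNReal.ofReal V ∧
        (∀ R' : MarsRep d, marsVar R' ≤ ENNReal.ofReal V →
          objB d nn x y R ≤ objB d nn x y R') ∧
        objA d nn x y m u p = objB d nn x y R ∧
        (∀ R' : MarsRep d, marsVar R' ≤ ENNReal.ofReal V →
          (∀ R'' : MarsRep d, marsVar R'' ≤ ENNReal.ofReal V →
            objB d nn x y R' ≤ objB d nn x y R'') →
          ∀ i, marsFun R' (x i) = fitA d nn x m u p i)) := by
  exact statement10_general x y hV.le ⟨humono, hu0, hu1⟩ fun i k => by
    rw [hurange k]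
    exact Or.inr (Or.inr ⟨i, rfl⟩)
end

section
/- Let d ≥ 1, let n₁,…,n_d ≥ 2 be integers, and let the design points be the equally spaced lattice points (i₁/n₁, …, i_d/n_d) for i ∈ I₀. Then for every V > 0, the set of fitted-value vectors { (f_{a₀,{ν_S}}(i₁/n₁,…,i_d/n_d))_{i∈I₀} : (a₀,{ν_S}) a MARS representation with V({ν_S}) ≤ V } is exactly equal to C(V) = {θ : I₀ → ℝ : V₂(θ) ≤ V}. -/
open Finset MeasureTheory
open scoped ENNReal

/-- The discrete mixed difference `(D^(β)θ)_i` (with `ℕ`-valued multi-indices). -/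
noncomputable def mixedDiff (d : ℕ) (β : Fin d → ℕ) (θ : (Fin d → ℕ) → ℝ)
    (i : Fin d → ℕ) : ℝ :=
  ∑ δ ∈ Fintype.piFinset (fun k => Finset.range (β k + 1)),
    (-1 : ℝ) ^ (∑ k, δ k) * (∏ k, ((β k).choose (δ k) : ℝ)) * θ (fun k => i k - δ k)

/-- The index set `I₀^(β)`. -/
def idxBeta (d : ℕ) (n β : Fin d → ℕ) : Finset (Fin d → ℕ) :=
  Fintype.piFinset fun k =>
    if β k = Finset.univ.sup β then Finset.Ico (Finset.univ.sup β) (n k)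
    else {β k}

/-- The complexity measure `V₂(θ)`. -/
noncomputable def V2 (d : ℕ) (n : Fin d → ℕ) (θ : (Fin d → ℕ) → ℝ) : ℝ :=
  ∑ β ∈ (Fintype.piFinset fun _ : Fin d => Finset.range 3).filter
      (fun β => Finset.univ.sup β = 2),
    (∏ k, (n k : ℝ) ^ (if β k = 2 then 1 else β k)) *
      ∑ i ∈ idxBeta d n β, |mixedDiff d β θ i|

/-- Extension of a vector indexed by `I₀ = Π_k {0,…,n_k-1}` to all of `ℕ^d` (by `0`). -/
noncomputable def latExtend (d : ℕ) (n : Fin d → ℕ)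
    (θ : (∀ k : Fin d, Fin (n k)) → ℝ) : (Fin d → ℕ) → ℝ :=
  fun j => if h : ∀ k, j k < n k then θ (fun k => ⟨j k, h k⟩) else 0

/-!
`V₂` is a weighted `ℓ¹`-seminorm of the coefficients of `θ` in the tensor products of discrete
hinges, namely of those coefficients in which some second difference occurs. It vanishes on
constants, so it can be pulled inside the integrals defining a MARS function, and everything reduces
to a single product of hinges `∏ⱼ max (xⱼ - tⱼ) 0`. Its coefficients are products of one-dimensional
ones, which are nonnegative by convexity and telescope: their weighted sum is at most `1`, and for
`t = 0` no second difference survives. Hence `V₂` of the fitted values is at most the variation.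

Conversely, the expansion of `θ` in this basis is itself a MARS function: the basis element with
multi-index `p` is a multiple of a product of hinges over the coordinates with `p k ≠ 0` and with
knot `((p k - 1) / n k)ₖ`. This knot is `0` exactly when `p` is not counted in `V₂`, so the atoms at
the knots have total variation at most `V₂ θ` away from `0`.
-/

section SignedIntegral

variable {α : Type*} [MeasurableSpace α] {ν : SignedMeasure α} {f : α → ℝ}

theorem sIntegral_eq_vectorMeasure_integral (hf : ν.Integrable f) :
    sIntegral ν f = ∫ᵛ t, f t ∂<•ν := by
  have hparts : Integrable f ν.toJordanDecomposition.posPart ∧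
      Integrable f ν.toJordanDecomposition.negPart := by
    rw [VectorMeasure.Integrable, ← SignedMeasure.totalVariation_eq_variation] at hf
    exact integrable_add_measure.1 hf
  conv_rhs => rw [← ν.toSignedMeasure_toJordanDecomposition, JordanDecomposition.toSignedMeasure]
  rw [VectorMeasure.integral_sub_vectorMeasure (by simpa [VectorMeasure.Integrable] using hparts.1)
      (by simpa [VectorMeasure.Integrable] using hparts.2),
    VectorMeasure.integral_toSignedMeasure, VectorMeasure.integral_toSignedMeasure, sIntegral]

theorem abs_vectorMeasure_integral_le (ν : SignedMeasure α) (f : α → ℝ) :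
    |∫ᵛ t, f t ∂<•ν| ≤ ∫ t, |f t| ∂ν.variation := by
  simpa using VectorMeasure.norm_integral_le_integral_norm (f := f) (μ := ν)
    (B := (ContinuousLinearMap.lsmul ℝ ℝ).flip)

variable [MeasurableSingletonClass α] {ι : Type*}

theorem sIntegral_sum_dirac (s : Finset ι) (x : ι → α) (a : ι → ℝ) (f : α → ℝ) :
    sIntegral (∑ i ∈ s, VectorMeasure.dirac (x i) (a i)) f = ∑ i ∈ s, a i * f (x i) := by
  have hf : ∀ i ∈ s, (VectorMeasure.dirac (x i) (a i)).Integrable f := fun i _ => by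
    rw [VectorMeasure.Integrable, VectorMeasure.variation_dirac]
    exact (integrable_dirac (by simp)).smul_measure (by simp)
  rw [sIntegral_eq_vectorMeasure_integral (VectorMeasure.Integrable.finsetSum_vectorMeasure hf),
    VectorMeasure.integral_finsetSum_vectorMeasure hf]
  simp

theorem totalVariation_sum_dirac_le (s : Finset ι) (x : ι → α) (a : ι → ℝ) (A : Set α) :
    SignedMeasure.totalVariation (∑ i ∈ s, VectorMeasure.dirac (x i) (a i)) A ≤
      ∑ i ∈ s, ‖a i‖ₑ * A.indicator 1 (x i) := by
  rw [SignedMeasure.totalVariation_eq_variation]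
  refine (VectorMeasure.variation_finsetSum_le s _ A).trans_eq ?_
  simp [Measure.finsetSum_apply]

end SignedIntegral

section MixedDiff

/-- The one-dimensional backward difference of order `b`, the factor of `mixedDiff` belonging to
one coordinate. As there, the index subtraction is truncated, so it is meant for `b ≤ i`. -/
noncomputable def backwardDiff (b : ℕ) (g : ℕ → ℝ) (i : ℕ) : ℝ :=
  ∑ δ ∈ range (b + 1), (-1) ^ δ * (b.choose δ : ℝ) * g (i - δ)

theorem backwardDiff_one_eq_zero {b : ℕ} (hb : b ≠ 0) (i : ℕ) :
    backwardDiff b (fun _ => 1) i = 0 := by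
  simpa [backwardDiff, zero_pow hb] using (add_pow (-1 : ℝ) 1 b).symm

variable {d : ℕ} {β i : Fin d → ℕ}

theorem mixedDiff_congr {θ θ' : (Fin d → ℕ) → ℝ} (h : ∀ j ≤ i, θ j = θ' j) :
    mixedDiff d β θ i = mixedDiff d β θ' i :=
  sum_congr rfl fun δ _ => by rw [h (fun k => i k - δ k) fun k => Nat.sub_le _ _]

theorem mixedDiff_add (θ θ' : (Fin d → ℕ) → ℝ) :
    mixedDiff d β (fun j => θ j + θ' j) i = mixedDiff d β θ i + mixedDiff d β θ' i := by
  simp only [mixedDiff, mul_add, sum_add_distrib]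

theorem mixedDiff_mul_const (θ : (Fin d → ℕ) → ℝ) (c : ℝ) :
    mixedDiff d β (fun j => θ j * c) i = mixedDiff d β θ i * c := by
  simp only [mixedDiff, sum_mul, mul_assoc]

theorem mixedDiff_sum {κ : Type*} (s : Finset κ) (F : κ → (Fin d → ℕ) → ℝ) :
    mixedDiff d β (fun j => ∑ a ∈ s, F a j) i = ∑ a ∈ s, mixedDiff d β (F a) i := by
  simp only [mixedDiff, mul_sum]
  exact sum_comm

theorem mixedDiff_prod (g : Fin d → ℕ → ℝ) :
    mixedDiff d β (fun j => ∏ k, g k (j k)) i = ∏ k, backwardDiff (β k) (g k) (i k) := by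
  simp only [mixedDiff, backwardDiff, prod_univ_sum, prod_mul_distrib, prod_pow_eq_pow_sum]

theorem mixedDiff_const_add (hβ : ∃ k, β k ≠ 0) (c : ℝ) (θ : (Fin d → ℕ) → ℝ) :
    mixedDiff d β (fun j => c + θ j) i = mixedDiff d β θ i := by
  obtain ⟨k, hk⟩ := hβ
  have hone : mixedDiff d β (fun _ => 1) i = 0 := by
    simpa using (mixedDiff_prod (β := β) (i := i) fun _ _ => 1).trans
      (prod_eq_zero (mem_univ k) (backwardDiff_one_eq_zero hk (i k)))
  have hconst := mixedDiff_mul_const (β := β) (i := i) (fun _ => 1) c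
  rw [mixedDiff_add]
  simp_all

theorem mixedDiff_integral {α : Type*} [MeasurableSpace α] {ν : SignedMeasure α}
    {F : (Fin d → ℕ) → α → ℝ} (hF : ∀ j, ν.Integrable (F j)) :
    mixedDiff d β (fun j => ∫ᵛ t, F j t ∂<•ν) i =
      ∫ᵛ t, mixedDiff d β (fun j => F j t) i ∂<•ν := by
  simp only [mixedDiff]
  rw [VectorMeasure.integral_finsetSum _ fun δ _ => (hF _).const_mul _]
  exact sum_congr rfl fun δ _ => (VectorMeasure.integral_fun_smul _ _ _ _).symm

theorem integrable_mixedDiff {α : Type*} [MeasurableSpace α] {μ : Measure α}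
    {F : (Fin d → ℕ) → α → ℝ} (hF : ∀ j, Integrable (F j) μ) :
    Integrable (fun t => mixedDiff d β (fun j => F j t) i) μ :=
  integrable_finsetSum _ fun _ _ => (hF _).const_mul _

end MixedDiff

section V2

variable {d : ℕ} {n : Fin d → ℕ}

theorem V2_const_add (c : ℝ) (θ : (Fin d → ℕ) → ℝ) :
    V2 d n (fun j => c + θ j) = V2 d n θ := by
  refine sum_congr rfl fun β hβ => ?_
  have hne : ∃ k, β k ≠ 0 := by
    by_contra! hzero
    have hsup : univ.sup β = 0 := Finset.sup_eq_bot_iff _ _ |>.2 fun k _ => hzero k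
    simp [hsup] at hβ
  simp only [mixedDiff_const_add hne]

theorem V2_sum_le {κ : Type*} (s : Finset κ) (F : κ → (Fin d → ℕ) → ℝ) :
    V2 d n (fun j => ∑ a ∈ s, F a j) ≤ ∑ a ∈ s, V2 d n (F a) := by
  simp only [V2, mixedDiff_sum]
  rw [sum_comm]
  refine sum_le_sum fun β _ => ?_
  rw [← mul_sum, sum_comm]
  gcongr
  exact abs_sum_le_sum_abs _ _

theorem V2_integral_le {α : Type*} [MeasurableSpace α] {ν : SignedMeasure α}
    {F : (Fin d → ℕ) → α → ℝ} (hF : ∀ j, ν.Integrable (F j)) :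
    V2 d n (fun j => ∫ᵛ t, F j t ∂<•ν) ≤ ∫ t, V2 d n (fun j => F j t) ∂ν.variation := by
  have hintegrable (β i : Fin d → ℕ) :
      Integrable (fun t => |mixedDiff d β (fun j => F j t) i|) ν.variation :=
    (integrable_mixedDiff hF).abs
  simp only [V2]
  rw [integral_finsetSum _ fun β _ =>
    (integrable_finsetSum _ fun i _ => hintegrable β i).const_mul _]
  refine sum_le_sum fun β _ => ?_
  rw [integral_const_mul, integral_finsetSum _ fun i _ => hintegrable β i]
  gcongr
  rw [mixedDiff_integral hF]
  exact abs_vectorMeasure_integral_le _ _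

theorem integrable_V2 {α : Type*} [MeasurableSpace α] {μ : Measure α}
    {F : (Fin d → ℕ) → α → ℝ} (hF : ∀ j, Integrable (F j) μ) :
    Integrable (fun t => V2 d n fun j => F j t) μ :=
  integrable_finsetSum _ fun _ _ =>
    (integrable_finsetSum _ fun _ _ => (integrable_mixedDiff hF).abs).const_mul _

end V2

section HingeCoeff

/-- The `p`-th coefficient of `g` in the discrete hinge basis `discreteHinge 0`,
`discreteHinge 1`, …: the backward difference of order `min p 2` at `p`. -/
noncomputable def hingeCoeff (g : ℕ → ℝ) (p : ℕ) : ℝ := backwardDiff (min p 2) g p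

/-- The discrete hinge basis on `ℕ`, evaluated at `i`: the constant `1`, followed by the hinges
`i ↦ max (i - p) 0` with knots `p = 0, 1, …`. -/
def discreteHinge : ℕ → ℕ → ℝ
  | 0, _ => 1
  | p + 1, i => ((i - p : ℕ) : ℝ)

variable (g : ℕ → ℝ)

theorem hingeCoeff_zero : hingeCoeff g 0 = g 0 := by simp [hingeCoeff, backwardDiff]

theorem hingeCoeff_one : hingeCoeff g 1 = g 1 - g 0 := by
  simp [hingeCoeff, backwardDiff, sum_range_succ, sub_eq_add_neg, add_comm]

theorem hingeCoeff_add_two (p : ℕ) :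
    hingeCoeff g (p + 2) = g (p + 2) - 2 * g (p + 1) + g p := by
  simp [hingeCoeff, backwardDiff, sum_range_succ, sub_eq_add_neg, add_comm]

theorem sum_hingeCoeff_succ (m : ℕ) :
    ∑ p ∈ range (m + 1), hingeCoeff g (p + 1) = g (m + 1) - g m := by
  induction m with
  | zero => simp [hingeCoeff_one]
  | succ m ih => rw [sum_range_succ, ih, hingeCoeff_add_two]; ring

theorem sum_weighted_hingeCoeff (c : ℝ) (m : ℕ) :
    ∑ p ∈ range (m + 2), (if p = 0 then 1 else c) * hingeCoeff g p =
      g 0 + c * (g (m + 1) - g m) := by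
  rw [sum_range_succ', ← sum_hingeCoeff_succ, mul_sum]
  simp [hingeCoeff_zero, add_comm]

theorem sum_sub_mul_hingeCoeff_succ (i : ℕ) :
    ∑ p ∈ range i, ((i - p : ℕ) : ℝ) * hingeCoeff g (p + 1) = g i - g 0 := by
  induction i with
  | zero => simp
  | succ i ih =>
    have hstep : ∀ p ∈ range (i + 1), ((i + 1 - p : ℕ) : ℝ) * hingeCoeff g (p + 1) =
        ((i - p : ℕ) : ℝ) * hingeCoeff g (p + 1) + hingeCoeff g (p + 1) := fun p hp => by
      rw [Nat.succ_sub (mem_range_succ_iff.1 hp)]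
      push_cast
      ring
    rw [sum_congr rfl hstep, sum_add_distrib, sum_hingeCoeff_succ, sum_range_succ, ih]
    simp

theorem sum_discreteHinge_mul_hingeCoeff {n i : ℕ} (hi : i < n) :
    ∑ p ∈ range n, discreteHinge p i * hingeCoeff g p = g i := by
  have hsub : range (i + 1) ⊆ range n := range_subset_range.2 hi
  rw [← sum_subset hsub, sum_range_succ']
  · simp [discreteHinge, sum_sub_mul_hingeCoeff_succ, hingeCoeff_zero]
  · rintro (_ | p) - hp
    · simp at hp
    · simp_all [discreteHinge, Nat.sub_eq_zero_of_le]

end HingeCoeff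

section MixedHingeCoeff

/-- The lattice `I₀ = ∏ₖ {0, …, nₖ - 1}`. -/
def latticeBox {d : ℕ} (n : Fin d → ℕ) : Finset (Fin d → ℕ) :=
  Fintype.piFinset fun k => range (n k)

/-- The coefficient of `θ` at `p` in the tensor-product hinge basis
`i ↦ ∏ k, discreteHinge (p k) (i k)`. -/
noncomputable def mixedHingeCoeff {d : ℕ} (θ : (Fin d → ℕ) → ℝ) (p : Fin d → ℕ) : ℝ :=
  mixedDiff d (fun k => min (p k) 2) θ p

/-- The weight of the coefficient at `p` in `V₂`. It turns the slope `1` of a discrete hinge, whose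
steps have length `1 / n k`, into the mass of an atom. -/
def latticeWeight {d : ℕ} (n p : Fin d → ℕ) : ℝ := ∏ k, if p k = 0 then 1 else (n k : ℝ)

variable {d : ℕ} {n : Fin d → ℕ}

theorem mem_latticeBox {p : Fin d → ℕ} : p ∈ latticeBox n ↔ ∀ k, p k < n k := by
  simp [latticeBox]

theorem latticeWeight_nonneg (n p : Fin d → ℕ) : 0 ≤ latticeWeight n p :=
  prod_nonneg fun k _ => by split_ifs <;> positivity

theorem mixedHingeCoeff_zero (θ : (Fin d → ℕ) → ℝ) : mixedHingeCoeff θ 0 = θ 0 := by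
  have hpi : Fintype.piFinset (fun _ : Fin d => ({0} : Finset ℕ)) = {0} :=
    Fintype.piFinset_singleton _
  simp [mixedHingeCoeff, mixedDiff, hpi, ← Pi.zero_def]

theorem mixedHingeCoeff_prod (g : Fin d → ℕ → ℝ) (p : Fin d → ℕ) :
    mixedHingeCoeff (fun j => ∏ k, g k (j k)) p = ∏ k, hingeCoeff (g k) (p k) :=
  mixedDiff_prod g

theorem sum_latticeBox_prod_mul_mixedHingeCoeff_prod (f : Fin d → ℕ → ℝ) (g : Fin d → ℕ → ℝ) :
    ∑ p ∈ latticeBox n, (∏ k, f k (p k)) * mixedHingeCoeff (fun j => ∏ k, g k (j k)) p =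
      ∏ k, ∑ x ∈ range (n k), f k x * hingeCoeff (g k) x := by
  simp only [mixedHingeCoeff_prod, ← prod_mul_distrib, prod_univ_sum, latticeBox]

theorem sum_latticeBox_mul_prod_single (θ : (Fin d → ℕ) → ℝ) {j : Fin d → ℕ}
    (hj : j ∈ latticeBox n) :
    ∑ q ∈ latticeBox n, (∏ k, (Pi.single (q k) 1 : ℕ → ℝ) (j k)) * θ q = θ j := by
  rw [sum_eq_single_of_mem j hj]
  · simp
  · intro q _ hq
    obtain ⟨k, hk⟩ := Function.ne_iff.1 hq
    rw [prod_eq_zero (mem_univ k) (Pi.single_eq_of_ne' hk _), zero_mul]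

/-- By linearity it is enough to treat the indicator functions of lattice points, which are
products of functions of one coordinate. -/
theorem sum_prod_discreteHinge_mul_mixedHingeCoeff (θ : (Fin d → ℕ) → ℝ) {i : Fin d → ℕ}
    (hi : i ∈ latticeBox n) :
    ∑ p ∈ latticeBox n, (∏ k, discreteHinge (p k) (i k)) * mixedHingeCoeff θ p = θ i := by
  have hcoeff : ∀ p ∈ latticeBox n, mixedHingeCoeff θ p = ∑ q ∈ latticeBox n,
      mixedHingeCoeff (fun j => ∏ k, (Pi.single (q k) 1 : ℕ → ℝ) (j k)) p * θ q := fun p hp => by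
    simp only [mixedHingeCoeff, ← mixedDiff_mul_const, ← mixedDiff_sum]
    refine mixedDiff_congr fun j hj => (sum_latticeBox_mul_prod_single θ ?_).symm
    exact mem_latticeBox.2 fun k => (hj k).trans_lt (mem_latticeBox.1 hp k)
  have hsingle (q : Fin d → ℕ) : ∑ p ∈ latticeBox n, (∏ k, discreteHinge (p k) (i k)) *
      mixedHingeCoeff (fun j => ∏ k, (Pi.single (q k) 1 : ℕ → ℝ) (j k)) p =
        ∏ k, (Pi.single (q k) 1 : ℕ → ℝ) (i k) := by
    rw [sum_latticeBox_prod_mul_mixedHingeCoeff_prod fun k x => discreteHinge x (i k)]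
    exact prod_congr rfl fun k _ => sum_discreteHinge_mul_hingeCoeff _ (mem_latticeBox.1 hi k)
  rw [sum_congr rfl fun p hp => by rw [hcoeff p hp, mul_sum], sum_comm]
  simp only [← mul_assoc, ← sum_mul, hsingle]
  exact sum_latticeBox_mul_prod_single θ hi

theorem sup_min_two_eq_two_iff (p : Fin d → ℕ) :
    (univ.sup fun k => min (p k) 2) = 2 ↔ ∃ k, 2 ≤ p k := by
  have hle : (univ.sup fun k => min (p k) 2) ≤ 2 := Finset.sup_le fun k _ => min_le_right _ _
  rw [← hle.ge_iff_eq, Finset.le_sup_iff (by simp)]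
  simp

theorem idxBeta_eq_filter (hn : ∀ k, 2 ≤ n k) {β : Fin d → ℕ} (hβ : univ.sup β = 2) :
    idxBeta d n β = {p ∈ latticeBox n | (fun k => min (p k) 2) = β} := by
  ext p
  simp only [idxBeta, hβ, Fintype.mem_piFinset, mem_filter, mem_latticeBox, funext_iff,
    ← forall_and]
  refine forall_congr' fun k => ?_
  have hk : β k ≤ 2 := hβ ▸ le_sup (mem_univ k)
  have := hn k
  split_ifs <;> simp only [mem_Ico, mem_singleton] <;> omega

theorem prod_pow_min_two_eq_latticeWeight (n p : Fin d → ℕ) :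
    ∏ k, (n k : ℝ) ^ (if min (p k) 2 = 2 then 1 else min (p k) 2) = latticeWeight n p := by
  refine prod_congr rfl fun k _ => ?_
  rcases p k with _ | _ | m <;> simp

theorem V2_eq_sum_mixedHingeCoeff (hn : ∀ k, 2 ≤ n k) (θ : (Fin d → ℕ) → ℝ) :
    V2 d n θ = ∑ p ∈ latticeBox n with ∃ k, 2 ≤ p k,
      latticeWeight n p * |mixedHingeCoeff θ p| := by
  have hmaps : ∀ p ∈ (latticeBox n).filter fun p => ∃ k, 2 ≤ p k, (fun k => min (p k) 2) ∈
      (Fintype.piFinset fun _ : Fin d => range 3).filter fun β => univ.sup β = 2 := fun p hp => by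
    simp [sup_min_two_eq_two_iff, (mem_filter.1 hp).2]
  rw [V2, ← sum_fiberwise_of_maps_to hmaps]
  refine sum_congr rfl fun β hβ => ?_
  have hsup : univ.sup β = 2 := (mem_filter.1 hβ).2
  have hfiber : {p ∈ {p ∈ latticeBox n | ∃ k, 2 ≤ p k} | (fun k => min (p k) 2) = β} =
      idxBeta d n β := by
    rw [idxBeta_eq_filter hn hsup, filter_filter]
    refine filter_congr fun p _ => and_iff_right_of_imp ?_
    rintro rfl
    exact (sup_min_two_eq_two_iff p).1 hsup
  rw [hfiber, mul_sum]
  refine sum_congr rfl fun p hp => ?_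
  rw [idxBeta_eq_filter hn hsup] at hp
  obtain ⟨-, rfl⟩ := mem_filter.1 hp
  rw [prod_pow_min_two_eq_latticeWeight, mixedHingeCoeff]

theorem V2_congr (hn : ∀ k, 2 ≤ n k) {θ θ' : (Fin d → ℕ) → ℝ}
    (h : ∀ i ∈ latticeBox n, θ i = θ' i) : V2 d n θ = V2 d n θ' := by
  simp only [V2_eq_sum_mixedHingeCoeff hn]
  refine sum_congr rfl fun p hp => ?_
  have hp := mem_latticeBox.1 (mem_filter.1 hp).1
  rw [mixedHingeCoeff, mixedDiff_congr fun j hj =>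
    h j (mem_latticeBox.2 fun k => (hj k).trans_lt (hp k)), mixedHingeCoeff]

theorem V2_prod_eq_zero (hn : ∀ k, 2 ≤ n k) {g : Fin d → ℕ → ℝ}
    (hg : ∀ k p, hingeCoeff (g k) (p + 2) = 0) : V2 d n (fun i => ∏ k, g k (i k)) = 0 := by
  rw [V2_eq_sum_mixedHingeCoeff hn]
  refine sum_eq_zero fun p hp => ?_
  obtain ⟨k, hk⟩ := (mem_filter.1 hp).2
  have hzero : hingeCoeff (g k) (p k) = 0 := by simpa [Nat.sub_add_cancel hk] using hg k (p k - 2)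
  rw [mixedHingeCoeff_prod, prod_eq_zero (mem_univ k) hzero, abs_zero, mul_zero]

theorem V2_prod_le (hn : ∀ k, 2 ≤ n k) (g : Fin d → ℕ → ℝ) :
    V2 d n (fun i => ∏ k, g k (i k)) ≤
      ∏ k, ∑ x ∈ range (n k), (if x = 0 then 1 else (n k : ℝ)) * |hingeCoeff (g k) x| := by
  simp only [V2_eq_sum_mixedHingeCoeff hn, prod_univ_sum, prod_mul_distrib, mixedHingeCoeff_prod,
    abs_prod]
  exact sum_le_sum_of_subset_of_nonneg (filter_subset _ _) fun p _ _ =>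
    mul_nonneg (latticeWeight_nonneg n p) (prod_nonneg fun _ _ => abs_nonneg _)

end MixedHingeCoeff

section Hinge

/-- The integrand `∏ⱼ max (xⱼ - tⱼ) 0` of a MARS function, with coordinates in an arbitrary finite
type so that one notion serves all the coordinate sets `S`. -/
def hingeProd {ι : Type*} [Fintype ι] (x t : ι → ℝ) : ℝ := ∏ j, max (x j - t j) 0

/-- The cube `∏ⱼ [0, 1)` on which the measures of a MARS representation are concentrated. -/
def halfOpenCube (ι : Type*) : Set (ι → ℝ) := {t | ∀ j, 0 ≤ t j ∧ t j < 1}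

variable {ι : Type*}

theorem measurableSet_halfOpenCube [Countable ι] : MeasurableSet (halfOpenCube ι) := by
  have hpi : halfOpenCube ι = Set.univ.pi fun _ => Set.Ico 0 1 := by
    ext t
    simp [halfOpenCube]
  rw [hpi]
  exact MeasurableSet.univ_pi fun _ => measurableSet_Ico

variable [Fintype ι]

theorem continuous_hingeProd (x : ι → ℝ) : Continuous (hingeProd x) := by
  unfold hingeProd
  fun_prop

theorem integrable_hingeProd {μ : Measure (ι → ℝ)} [IsFiniteMeasure μ] (hμ : ∀ᵐ t ∂μ, 0 ≤ t)
    (x : ι → ℝ) : Integrable (hingeProd x) μ := by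
  refine Integrable.of_bound (continuous_hingeProd x).aestronglyMeasurable (hingeProd x 0) ?_
  filter_upwards [hμ] with t ht
  rw [hingeProd, Real.norm_of_nonneg (prod_nonneg fun j _ => le_max_right _ _)]
  exact prod_le_prod (fun j _ => le_max_right _ _) fun j _ =>
    max_le_max_right 0 (sub_le_sub_left (ht j) _)

end Hinge

section HingeVariation

theorem hingeCoeff_affine (a b : ℝ) (p : ℕ) : hingeCoeff (fun m => a * m + b) (p + 2) = 0 := by
  rw [hingeCoeff_add_two]
  push_cast
  ring

theorem hingeCoeff_one_fun (p : ℕ) : hingeCoeff (fun _ => 1) p = if p = 0 then 1 else 0 := by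
  rcases p with _ | _ | p
  · simp [hingeCoeff_zero]
  · simp [hingeCoeff_one]
  · simpa using hingeCoeff_affine 0 1 p

/-- After the first two, the coefficients are second differences of a convex function. -/
theorem hingeCoeff_hinge_nonneg (n : ℕ) {t : ℝ} (ht : 0 ≤ t) (p : ℕ) :
    0 ≤ hingeCoeff (fun m => max ((m : ℝ) / n - t) 0) p := by
  rcases p with _ | _ | p
  · simp [hingeCoeff_zero]
  · simp [hingeCoeff_one, ht]
  · rw [hingeCoeff_add_two]
    have hmid : 2 * (((p + 1 : ℕ) : ℝ) / n - t) =
        (((p + 2 : ℕ) : ℝ) / n - t) + ((p : ℝ) / n - t) := by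
      push_cast
      ring
    have hconvex : 2 * max (((p + 1 : ℕ) : ℝ) / n - t) 0 ≤
        max (((p + 2 : ℕ) : ℝ) / n - t) 0 + max ((p : ℝ) / n - t) 0 := by
      rw [mul_max_of_nonneg _ _ zero_le_two, mul_zero, hmid]
      exact max_le (add_le_add (le_max_left _ _) (le_max_left _ _))
        (add_nonneg (le_max_right _ _) (le_max_right _ _))
    linarith

theorem sum_weighted_abs_hingeCoeff_hinge_le_one {n : ℕ} (hn : 2 ≤ n) {t : ℝ} (ht : 0 ≤ t) :
    ∑ p ∈ range n, (if p = 0 then 1 else (n : ℝ)) *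
      |hingeCoeff (fun m => max ((m : ℝ) / n - t) 0) p| ≤ 1 := by
  obtain ⟨m, rfl⟩ := Nat.exists_eq_add_of_le' hn
  simp only [abs_of_nonneg (hingeCoeff_hinge_nonneg _ ht _), sum_weighted_hingeCoeff]
  set N : ℝ := ((m + 2 : ℕ) : ℝ)
  have hpos : 0 < N := by positivity
  have hzero : max (((0 : ℕ) : ℝ) / N - t) 0 = 0 := by simp [ht]
  have hstep : ((m + 1 : ℕ) : ℝ) / N - t = (m / N - t) + 1 / N := by
    push_cast
    ring
  have hslope : max (((m + 1 : ℕ) : ℝ) / N - t) 0 - max (m / N - t) 0 ≤ 1 / N := by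
    rw [hstep, sub_le_iff_le_add', ← max_add_add_right, zero_add]
    exact max_le_max_left _ (one_div_pos.2 hpos).le
  calc _ = N * (max (((m + 1 : ℕ) : ℝ) / N - t) 0 - max (m / N - t) 0) := by rw [hzero, zero_add]
    _ ≤ N * (1 / N) := by gcongr
    _ = 1 := mul_one_div_cancel hpos.ne'

/-- The design point `(i₁ / n₁, …, i_d / n_d)`. -/
noncomputable def latticePoint {d : ℕ} (n i : Fin d → ℕ) : Fin d → ℝ := fun k => (i k : ℝ) / n k

/-- The factor of the hinge product with knot `t` that depends on the `k`-th lattice coordinate; it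
is `1` for the coordinates `k ∉ S`. -/
noncomputable def coordHinge {d : ℕ} (n : Fin d → ℕ) {S : Finset (Fin d)}
    (t : S → ℝ) (k : Fin d) (m : ℕ) : ℝ :=
  if h : k ∈ S then max ((m : ℝ) / n k - t ⟨k, h⟩) 0 else 1

variable {d : ℕ} {n : Fin d → ℕ} {S : Finset (Fin d)}

theorem prod_dite_mem_one (f : S → ℝ) :
    ∏ k, (if h : k ∈ S then f ⟨k, h⟩ else 1) = ∏ j, f j := by
  rw [Fintype.prod_dite, prod_const_one, mul_one]
  congr!

theorem hingeProd_latticePoint (n i : Fin d → ℕ) (t : S → ℝ) :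
    hingeProd (fun j : S => latticePoint n i j) t = ∏ k, coordHinge n t k (i k) :=
  (prod_dite_mem_one _).symm

theorem V2_hingeProd_zero (hn : ∀ k, 2 ≤ n k) :
    V2 d n (fun i => hingeProd (fun j : S => latticePoint n i j) 0) = 0 := by
  simp only [hingeProd_latticePoint]
  refine V2_prod_eq_zero hn fun k p => ?_
  by_cases hk : k ∈ S
  · have haffine : coordHinge n (0 : S → ℝ) k = fun m : ℕ => (n k : ℝ)⁻¹ * m + 0 := by
      funext m
      have : 0 ≤ (n k : ℝ)⁻¹ * m := by positivity
      simp [coordHinge, hk, this, div_eq_inv_mul]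
    rw [haffine, hingeCoeff_affine]
  · have hone : coordHinge n (0 : S → ℝ) k = fun _ => 1 := by
      funext m
      simp [coordHinge, hk]
    rw [hone, hingeCoeff_one_fun, if_neg (by omega)]

theorem V2_hingeProd_le_one (hn : ∀ k, 2 ≤ n k) {t : S → ℝ} (ht : 0 ≤ t) :
    V2 d n (fun i => hingeProd (fun j : S => latticePoint n i j) t) ≤ 1 := by
  simp only [hingeProd_latticePoint]
  refine (V2_prod_le hn _).trans (prod_le_one (fun k _ => ?_) fun k _ => ?_)
  · exact sum_nonneg fun x _ => mul_nonneg (by split_ifs <;> positivity) (abs_nonneg _)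
  by_cases hk : k ∈ S
  · have hhinge : coordHinge n t k = fun m : ℕ => max ((m : ℝ) / n k - t ⟨k, hk⟩) 0 := by
      funext m
      simp [coordHinge, hk]
    rw [hhinge]
    exact sum_weighted_abs_hingeCoeff_hinge_le_one (hn k) (ht _)
  · have hone : coordHinge n t k = fun _ => 1 := by
      funext m
      simp [coordHinge, hk]
    have : 0 < n k := by have := hn k; omega
    simp [hone, hingeCoeff_one_fun, this, apply_ite abs]

theorem V2_hingeProd_le_indicator (hn : ∀ k, 2 ≤ n k) {t : S → ℝ}
    (ht : t ∈ halfOpenCube S) :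
    V2 d n (fun i => hingeProd (fun j : S => latticePoint n i j) t) ≤
      (halfOpenCube S \ {fun _ => 0}).indicator 1 t := by
  by_cases h0 : t = 0
  · subst h0
    rw [V2_hingeProd_zero hn, Set.indicator_of_notMem fun h => h.2 rfl]
  · rw [Set.indicator_of_mem (show t ∈ halfOpenCube S \ {fun _ => 0} from ⟨ht, h0⟩)]
    exact V2_hingeProd_le_one hn fun j => (ht j).1

end HingeVariation

section Forward

variable {d : ℕ} {n : Fin d → ℕ}

theorem V2_sIntegral_hingeProd_le (hn : ∀ k, 2 ≤ n k) {S : Finset (Fin d)}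
    {ν : SignedMeasure (S → ℝ)}
    (hν : ν.totalVariation (halfOpenCube S)ᶜ = 0) :
    V2 d n (fun i => sIntegral ν (hingeProd fun j : S => latticePoint n i j)) ≤
      ν.totalVariation.real (halfOpenCube S \ {fun _ => 0}) := by
  have hcube : ∀ᵐ t ∂ν.totalVariation, t ∈ halfOpenCube S := ae_iff.2 hν
  have hintegrable (x : S → ℝ) : Integrable (hingeProd x) ν.totalVariation :=
    integrable_hingeProd (hcube.mono fun t ht j => (ht j).1) x
  have hintegrableν (x : S → ℝ) : ν.Integrable (hingeProd x) := by
    rw [VectorMeasure.Integrable, ← SignedMeasure.totalVariation_eq_variation]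
    exact hintegrable x
  have hmeas : MeasurableSet (halfOpenCube S \ {fun _ => 0}) :=
    measurableSet_halfOpenCube.diff (measurableSet_singleton _)
  calc V2 d n (fun i => sIntegral ν (hingeProd fun j : S => latticePoint n i j))
      = V2 d n (fun i => ∫ᵛ t, hingeProd (fun j : S => latticePoint n i j) t ∂<•ν) := by
        simp only [sIntegral_eq_vectorMeasure_integral (hintegrableν _)]
    _ ≤ ∫ t, V2 d n (fun i => hingeProd (fun j : S => latticePoint n i j) t) ∂ν.totalVariation := by
        rw [SignedMeasure.totalVariation_eq_variation]
        exact V2_integral_le fun i => hintegrableν _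
    _ ≤ ∫ t, (halfOpenCube S \ {fun _ => 0}).indicator 1 t ∂ν.totalVariation :=
        integral_mono_ae (integrable_V2 fun i => hintegrable _)
          ((integrable_const 1).indicator hmeas)
          (hcube.mono fun t ht => V2_hingeProd_le_indicator hn ht)
    _ = _ := integral_indicator_one hmeas

theorem V2_marsFun_le (hn : ∀ k, 2 ≤ n k) (R : MarsRep d) :
    V2 d n (fun i => marsFun R (latticePoint n i)) ≤ (marsVar R).toReal := by
  rw [marsVar, ENNReal.toReal_sum fun S _ => by split_ifs <;> finiteness]
  simp only [marsFun, V2_const_add]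
  refine (V2_sum_le _ _).trans (sum_le_sum fun S _ => ?_)
  split_ifs with hS
  · exact V2_sIntegral_hingeProd_le hn (R.conc S)
  · simp [V2, mixedDiff]

end Forward

section Backward

/-- The coordinates on which the basis function `i ↦ ∏ k, discreteHinge (p k) (i k)` depends. -/
def activeCoords {d : ℕ} (p : Fin d → ℕ) : Finset (Fin d) := {k | p k ≠ 0}

/-- The knot of the `p`-th tensor-product hinge. The truncated subtraction `p j - 1` is only
relevant for `S = activeCoords p`, where `p j ≥ 1`. -/
noncomputable def hingeKnot {d : ℕ} (n : Fin d → ℕ) (S : Finset (Fin d)) (p : Fin d → ℕ) (j : S) :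
    ℝ :=
  ((p j - 1 : ℕ) : ℝ) / n j

variable {d : ℕ} {n : Fin d → ℕ}

theorem hingeKnot_mem_halfOpenCube {p : Fin d → ℕ} (hp : p ∈ latticeBox n) (S : Finset (Fin d)) :
    hingeKnot n S p ∈ halfOpenCube S := fun j => by
  have hlt := mem_latticeBox.1 hp j
  refine ⟨by unfold hingeKnot; positivity, (div_lt_one ?_).2 ?_⟩
  · exact_mod_cast hlt.pos
  · exact_mod_cast (Nat.sub_le _ _).trans_lt hlt

theorem indicator_hingeKnot_le (n : Fin d → ℕ) (S : Finset (Fin d)) (p : Fin d → ℕ) :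
    (halfOpenCube S \ {fun _ => 0}).indicator (1 : (S → ℝ) → ℝ≥0∞) (hingeKnot n S p) ≤
      if ∃ k, 2 ≤ p k then 1 else 0 := by
  split_ifs with h
  · exact Set.indicator_le_self _ _ _
  · push Not at h
    have hzero : hingeKnot n S p = fun _ => 0 := by
      funext j
      simp [hingeKnot, Nat.sub_eq_zero_of_le (Nat.le_of_lt_succ (h j))]
    simp [hzero]

theorem mul_hinge_eq_discreteHinge {N : ℕ} (hN : N ≠ 0) (p i : ℕ) :
    (N : ℝ) * max ((i : ℝ) / N - (p : ℝ) / N) 0 = discreteHinge (p + 1) i := by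
  have hpos : (0 : ℝ) < N := by positivity
  rw [← sub_div, mul_max_of_nonneg _ _ hpos.le, mul_zero, mul_div_cancel₀ _ hpos.ne',
    discreteHinge]
  rcases le_total p i with h | h <;> simp [h, Nat.cast_sub]

theorem latticeWeight_mul_hingeProd_hingeKnot (hn : ∀ k, n k ≠ 0) (p i : Fin d → ℕ) :
    latticeWeight n p * hingeProd (fun j : activeCoords p => latticePoint n i j)
      (hingeKnot n (activeCoords p) p) = ∏ k, discreteHinge (p k) (i k) := by
  rw [hingeProd_latticePoint, latticeWeight, ← prod_mul_distrib]
  refine prod_congr rfl fun k _ => ?_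
  rcases hk : p k with _ | m
  · simp [coordHinge, activeCoords, hk, discreteHinge]
  · simpa [coordHinge, activeCoords, hk, hingeKnot] using mul_hinge_eq_discreteHinge (hn k) m (i k)

/-- The piecewise multilinear interpolation of `θ`: each tensor-product hinge with nonzero
coefficient contributes an atom at its knot. -/
noncomputable def latticeMarsRep (n : Fin d → ℕ) (θ : (Fin d → ℕ) → ℝ) : MarsRep d where
  a0 := θ 0
  ν S := ∑ p ∈ latticeBox n with activeCoords p = S,
    VectorMeasure.dirac (hingeKnot n S p) (latticeWeight n p * mixedHingeCoeff θ p)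
  conc S := by
    refine nonpos_iff_eq_zero.1 ((totalVariation_sum_dirac_le _ _ _ _).trans ?_)
    refine (sum_eq_zero fun p hp => ?_).le
    rw [Set.indicator_of_notMem, mul_zero]
    exact Set.notMem_compl_iff.2 (hingeKnot_mem_halfOpenCube (mem_filter.1 hp).1 S)

theorem sIntegral_latticeMarsRep (hn : ∀ k, n k ≠ 0) (θ : (Fin d → ℕ) → ℝ) (i : Fin d → ℕ)
    (S : Finset (Fin d)) :
    sIntegral ((latticeMarsRep n θ).ν S) (hingeProd fun j : S => latticePoint n i j) =
      ∑ p ∈ latticeBox n with activeCoords p = S,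
        (∏ k, discreteHinge (p k) (i k)) * mixedHingeCoeff θ p := by
  refine (sIntegral_sum_dirac _ _ _ _).trans (sum_congr rfl fun p hp => ?_)
  obtain ⟨-, rfl⟩ := mem_filter.1 hp
  rw [← latticeWeight_mul_hingeProd_hingeKnot hn, mul_right_comm]

theorem filter_activeCoords_eq_empty (hn : ∀ k, n k ≠ 0) :
    {p ∈ latticeBox n | activeCoords p = ∅} = {0} := by
  ext p
  have hzero : activeCoords p = ∅ ↔ p = 0 := by simp [activeCoords, filter_eq_empty_iff, funext_iff]
  simp only [mem_filter, hzero, mem_singleton, and_iff_right_iff_imp, mem_latticeBox]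
  rintro rfl k
  exact Nat.pos_of_ne_zero (hn k)

theorem marsFun_latticeMarsRep (θ : (Fin d → ℕ) → ℝ) {i : Fin d → ℕ} (hi : i ∈ latticeBox n) :
    marsFun (latticeMarsRep n θ) (latticePoint n i) = θ i := by
  have hn (k : Fin d) : n k ≠ 0 := (mem_latticeBox.1 hi k).ne_bot
  have hfiber (S : Finset (Fin d)) : ∑ p ∈ latticeBox n with activeCoords p = S,
      (∏ k, discreteHinge (p k) (i k)) * mixedHingeCoeff θ p =
        (if S = ∅ then θ 0 else 0) + if S.Nonempty then
          sIntegral ((latticeMarsRep n θ).ν S) (hingeProd fun j : S => latticePoint n i j)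
        else 0 := by
    rcases S.eq_empty_or_nonempty with rfl | hS
    · simp [filter_activeCoords_eq_empty hn, mixedHingeCoeff_zero, discreteHinge]
    · simp [hS, hS.ne_empty, sIntegral_latticeMarsRep hn]
  rw [← sum_prod_discreteHinge_mul_mixedHingeCoeff θ hi, ← sum_fiberwise _ activeCoords]
  simp only [hfiber, sum_add_distrib, sum_ite_eq', mem_univ, if_true]
  rfl

theorem marsVar_latticeMarsRep_le (hn : ∀ k, 2 ≤ n k) (θ : (Fin d → ℕ) → ℝ) :
    marsVar (latticeMarsRep n θ) ≤ ENNReal.ofReal (V2 d n θ) := by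
  have hfiber (S : Finset (Fin d)) :
      (if S.Nonempty then ((latticeMarsRep n θ).ν S).totalVariation
        (halfOpenCube S \ {fun _ => 0}) else 0) ≤
      ∑ p ∈ latticeBox n with activeCoords p = S, if ∃ k, 2 ≤ p k then
        ENNReal.ofReal (latticeWeight n p * |mixedHingeCoeff θ p|) else 0 := by
    split_ifs
    · refine (totalVariation_sum_dirac_le _ _ _ _).trans (sum_le_sum fun p _ => ?_)
      rw [Real.enorm_eq_ofReal_abs, abs_mul, abs_of_nonneg (latticeWeight_nonneg n p)]
      simpa using mul_le_mul_right (indicator_hingeKnot_le n S p) _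
    · exact zero_le
  rw [V2_eq_sum_mixedHingeCoeff hn, ENNReal.ofReal_sum_of_nonneg fun p _ =>
    mul_nonneg (latticeWeight_nonneg n p) (abs_nonneg _), sum_filter,
    ← sum_fiberwise _ activeCoords]
  exact sum_le_sum fun S _ => hfiber S

end Backward

/-- On the equally spaced lattice design, the set of design-point
value vectors of MARS representations with variation at most `V` is exactly
`C(V) = {θ : V₂(θ) ≤ V}`. -/
theorem statement11 (d : ℕ) (hd : 1 ≤ d) (n : Fin d → ℕ) (hn : ∀ k, 2 ≤ n k)
    (V : ℝ) (hV : 0 < V) :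
    {θ : (∀ k : Fin d, Fin (n k)) → ℝ |
        ∃ R : MarsRep d, marsVar R ≤ ENNReal.ofReal V ∧
          ∀ i : ∀ k : Fin d, Fin (n k),
            θ i = marsFun R fun k => ((i k : ℕ) : ℝ) / (n k : ℝ)} =
      {θ : (∀ k : Fin d, Fin (n k)) → ℝ | V2 d n (latExtend d n θ) ≤ V} := by
  ext θ
  have hext (i : ∀ k, Fin (n k)) : latExtend d n θ (fun k => i k) = θ i := by simp [latExtend]
  constructor
  · rintro ⟨R, hR, hfit⟩
    have hagree : ∀ i ∈ latticeBox n, latExtend d n θ i = marsFun R (latticePoint n i) :=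
      fun i hi => (hext fun k => ⟨i k, mem_latticeBox.1 hi k⟩).trans (hfit _)
    calc V2 d n (latExtend d n θ)
        = V2 d n (fun i => marsFun R (latticePoint n i)) := V2_congr hn hagree
      _ ≤ (marsVar R).toReal := V2_marsFun_le hn R
      _ ≤ V := ENNReal.toReal_le_of_le_ofReal hV.le hR
  · intro hθ
    refine ⟨latticeMarsRep n (latExtend d n θ), ?_, fun i => ?_⟩
    · exact (marsVar_latticeMarsRep_le hn _).trans (ENNReal.ofReal_le_ofReal hθ)
    · have hi : (fun k => (i k : ℕ)) ∈ latticeBox n := mem_latticeBox.2 fun k => (i k).2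
      rw [← hext i]
      exact (marsFun_latticeMarsRep _ hi).symm
end
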